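/- arXiv:2312.15833 — 2 statements merged into one kernel-verified Lean document; each statement's English description precedes it below -/
import Mathlib

section
/- There exist positive absolute constants C, c such that for every positive integer n, every β ≥ 2, every s ∈ [n], every t ∈ [n], and every real r ≥ 2, the complement of the event K_{t,r} satisfies P((K_{t,r})^c) ≤ C r t exp(-2β - c √r). -/
/-!
Since `β ≥ 2`, the window of `K_{t,r}` has at most `r t + 1` indices `l`, and `K_{t,r}` can fail at
`l` only if some `j ∈ H_l` has `l - j > r - 1`: if all elements of `H_l` are within `r - 1` of `l`,
then `H_l` also has at most `r - 1` elements (`constraints_of_close`). So a union bound over pairs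
`(j, l)` reduces everything to the estimate `P(b_j ≥ l) ≤ 3 (16 e^{-2β})^{l-j}`
(`hitRun_bVal_le`), which is summed geometrically.

For that estimate, let `X` be the cost `∑ |c(i) - i|` of the cycle `c` of `σ₀` through `j`. The
displacements of `c` sum to zero, so `2 (σ₀(j) - j)⁺ ≤ X`, and with `γ = β - log 4` the exponential
tail gives `P(b_j ≥ l | σ₀) ≤ e^{-2γ(l-j)} e^{γX}`. It remains to see that `E[e^{γX}] ≤ 3`
(`sum_weight_cycle_le`). Deleting the cycle maps `σ₀` injectively to a pair (permutation, cycle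
through `j`) and splits the Mallows weight as a product, so the expectation is at most
`∑_c 4^{-cost(c)}` over the identity and the cycles `c` through `j`. A `k`-cycle through `j` is
determined by its `k` nonzero orbit increments, whence this sum is at most
`∑_k (2 ∑_{d ≥ 1} 4^{-d})^k = ∑_k (2/3)^k = 3` (`sum_cycles_le`).
-/

open scoped BigOperators Classical ENNReal
open MeasureTheory

/-- The (unnormalized) Mallows weight `exp(-β ∑ᵢ |σ(i) - i|)` for the `L¹` distance.
Permutations of `[n] = {1, …, n}` are modeled as permutations of `Fin n`. -/
noncomputable def mallowsWeight (n : ℕ) (β : ℝ) (σ : Equiv.Perm (Fin n)) : ℝ :=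
  Real.exp (-β * ∑ i : Fin n, |((σ i : ℕ) : ℝ) - ((i : ℕ) : ℝ)|)

/-- The probability of `σ` under the Mallows permutation model `P_{n,β}`. -/
noncomputable def mallowsProb (n : ℕ) (β : ℝ) (σ : Equiv.Perm (Fin n)) : ℝ :=
  mallowsWeight n β σ / ∑ τ : Equiv.Perm (Fin n), mallowsWeight n β τ

instance (n : ℕ) : MeasurableSpace (Equiv.Perm (Fin n)) := ⊤

/-- The Mallows model `P_{n,β}` as a measure on `S_n`. -/
noncomputable def mallowsMeasure (n : ℕ) (β : ℝ) : Measure (Equiv.Perm (Fin n)) :=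
  ∑ σ : Equiv.Perm (Fin n),
    ENNReal.ofReal (mallowsProb n β σ) • MeasureTheory.Measure.dirac σ

/-- The probability space carrying `σ₀ ~ P_{n,β}` together with `n` i.i.d. exponential
random variables `E₁, …, E_n` of rate `2β`, independent of `σ₀`.  A sample point is
`ω = (σ₀, (E_k)_{k ∈ [n]})`. -/
noncomputable def hitRunMeasure (n : ℕ) (β : ℝ) :
    Measure (Equiv.Perm (Fin n) × (Fin n → ℝ)) :=
  (mallowsMeasure n β).prod
    (Measure.pi fun _ : Fin n => ProbabilityTheory.expMeasure (2 * β))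

/-- `b_k = max{k, σ₀(k)} + E_k` (so that, conditionally on `σ₀`,
`P(b_k ≥ x | σ₀) = exp(-2β (x - max{k, σ₀(k)})₊)`).  In `Fin n` coordinates all the
`b_k` and the thresholds `j` are shifted by one simultaneously. -/
noncomputable def bVal (n : ℕ) (ω : Equiv.Perm (Fin n) × (Fin n → ℝ)) (k : Fin n) : ℝ :=
  max ((k : ℕ) : ℝ) ((ω.1 k : ℕ) : ℝ) + ω.2 k

/-- `H_j = {k ∈ [n] : k ≤ j - 1, b_k ≥ j}`. -/
noncomputable def Hset (n : ℕ) (ω : Equiv.Perm (Fin n) × (Fin n → ℝ)) (j : Fin n) :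
    Finset (Fin n) :=
  Finset.univ.filter fun k => k < j ∧ ((j : ℕ) : ℝ) ≤ bVal n ω k

/-- `N_j = 1 + #{k ∈ [n] : k ≤ j - 1, b_k ≥ j}`. -/
noncomputable def Nval (n : ℕ) (ω : Equiv.Perm (Fin n) × (Fin n → ℝ)) (j : Fin n) : ℕ :=
  1 + (Hset n ω j).card

/-- The event `K_{t,r}` (for a fixed `s ∈ [n]`): for every `l ∈ [n]` with
`s - r t min{β,1}⁻⁴ ≤ l ≤ s`, one has `max_{j ∈ H_l} (l - j) ≤ r` (maximum over the
empty set being `0`) and `N_l ≤ r min{β,1}⁻¹`.  The inequalities are invariant under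
the common index shift between `[n]` and `Fin n`. -/
def Kevent (n : ℕ) (β : ℝ) (s : Fin n) (t : ℕ) (r : ℝ) :
    Set (Equiv.Perm (Fin n) × (Fin n → ℝ)) :=
  {ω | ∀ l : Fin n,
    ((s : ℕ) : ℝ) - r * t * (min β 1 ^ 4)⁻¹ ≤ ((l : ℕ) : ℝ) → l ≤ s →
      ((((Hset n ω l).sup fun j => (l : ℕ) - (j : ℕ)) : ℕ) : ℝ) ≤ r ∧
        (Nval n ω l : ℝ) ≤ r * (min β 1)⁻¹}

/-! ### Cost of a permutation and of its cycles -/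

/-- The `L¹` distance of `σ` to the identity, as a natural number. -/
def permCost {n : ℕ} (σ : Equiv.Perm (Fin n)) : ℕ :=
  ∑ i : Fin n, (((σ i : ℕ) : ℤ) - ((i : ℕ) : ℤ)).natAbs

lemma mallowsWeight_eq (n : ℕ) (β : ℝ) (σ : Equiv.Perm (Fin n)) :
    mallowsWeight n β σ = Real.exp (-β * permCost σ) := by
  unfold mallowsWeight permCost
  congr 2
  push_cast [Nat.cast_natAbs]
  rfl

lemma permCost_mul_of_disjoint {n : ℕ} {f g : Equiv.Perm (Fin n)}
    (h : Equiv.Perm.Disjoint f g) : permCost (f * g) = permCost f + permCost g := by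
  unfold permCost
  rw [← Finset.sum_add_distrib]
  refine Finset.sum_congr rfl fun x _ => ?_
  rcases h x with hx | hx
  · rw [h.commute.eq, Equiv.Perm.mul_apply, hx]
    simp
  · rw [Equiv.Perm.mul_apply, hx]
    simp

/-- Since the displacements of a permutation sum to zero, an upward displacement accounts for
at most half of the cost. -/
lemma two_mul_displacement_le {n : ℕ} (c : Equiv.Perm (Fin n)) (j : Fin n) :
    2 * (((c j : ℕ) : ℤ) - ((j : ℕ) : ℤ)) ≤ permCost c := by
  have h0 : ∑ x : Fin n, (((c x : ℕ) : ℤ) - ((x : ℕ) : ℤ)) = 0 := by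
    rw [Finset.sum_sub_distrib, Equiv.sum_comp c (fun x : Fin n => ((x : ℕ) : ℤ)), sub_self]
  have h1 : (permCost c : ℤ) = ∑ x : Fin n,
      (((((c x : ℕ) : ℤ) - ((x : ℕ) : ℤ)).natAbs : ℤ) + (((c x : ℕ) : ℤ) - ((x : ℕ) : ℤ))) := by
    rw [Finset.sum_add_distrib, h0, permCost]
    push_cast
    ring
  rw [h1]
  refine le_trans ?_ (Finset.single_le_sum (fun x _ => ?_) (Finset.mem_univ j))
  · omega
  · omega

lemma sum_quarter_pow_le (m : ℕ) :
    ∑ d ∈ (Finset.Icc (-(m : ℤ)) m).erase 0, (1 / 4 : ℝ) ^ d.natAbs ≤ 2 / 3 := by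
  have h : ∑ d ∈ (Finset.Icc (-(m : ℤ)) m).erase 0, (1 / 4 : ℝ) ^ d.natAbs
      = 2 / 3 - 2 / 3 * (1 / 4) ^ m := by
    induction m with
    | zero => norm_num
    | succ m ih =>
      have hs : (Finset.Icc (-((m + 1 : ℕ) : ℤ)) ((m + 1 : ℕ) : ℤ)).erase 0
          = insert ((m + 1 : ℕ) : ℤ) (insert (-((m + 1 : ℕ) : ℤ))
            ((Finset.Icc (-(m : ℤ)) m).erase 0)) := by
        ext d
        simp only [Finset.mem_erase, Finset.mem_Icc, Finset.mem_insert]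
        omega
      rw [hs, Finset.sum_insert, Finset.sum_insert, ih, Int.natAbs_neg, Int.natAbs_natCast]
      · ring
      · simp only [Finset.mem_erase, Finset.mem_Icc]
        omega
      · simp only [Finset.mem_erase, Finset.mem_Icc, Finset.mem_insert]
        omega
  rw [h]
  have : (0 : ℝ) ≤ (1 / 4) ^ m := by positivity
  linarith

/-- The permutations which are the identity or a single cycle moving `j`: the possible values of
`σ.cycleOf j`. -/
def IsCycleThrough {n : ℕ} (j : Fin n) (c : Equiv.Perm (Fin n)) : Prop :=
  c = 1 ∨ (c.IsCycle ∧ c j ≠ j)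

/-- The increments `c^{i+1} j - c^i j`, `i < k`, of the orbit of `j` under `c`. -/
def orbitSteps {n : ℕ} (j : Fin n) (k : ℕ) (c : Equiv.Perm (Fin n)) (i : Fin k) : ℤ :=
  ((((c ^ ((i : ℕ) + 1)) j : Fin n) : ℕ) : ℤ) - ((((c ^ (i : ℕ)) j : Fin n) : ℕ) : ℤ)

lemma orbitSteps_mem {n : ℕ} {j : Fin n} {k : ℕ} {c : Equiv.Perm (Fin n)} (hj : c j ≠ j) :
    orbitSteps j k c ∈ Fintype.piFinset
      (fun _ : Fin k => (Finset.Icc (-(n : ℤ)) n).erase 0) := by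
  rw [Fintype.mem_piFinset]
  intro i
  have h : (c ^ ((i : ℕ) + 1)) j ≠ (c ^ (i : ℕ)) j := by
    rw [pow_succ, Equiv.Perm.mul_apply]
    exact fun h => hj ((c ^ (i : ℕ)).injective h)
  have h' : (((c ^ ((i : ℕ) + 1)) j : Fin n) : ℕ) ≠ (((c ^ (i : ℕ)) j : Fin n) : ℕ) :=
    fun e => h (Fin.ext e)
  have h1 := ((c ^ ((i : ℕ) + 1)) j).isLt
  have h2 := ((c ^ (i : ℕ)) j).isLt
  simp only [orbitSteps, Finset.mem_erase, Finset.mem_Icc]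
  omega

lemma sum_orbitSteps_le {n : ℕ} {j : Fin n} {k : ℕ} {c : Equiv.Perm (Fin n)} (hc : c.IsCycle)
    (hj : c j ≠ j) (hk : c.support.card = k) :
    ∑ i : Fin k, (orbitSteps j k c i).natAbs ≤ permCost c := by
  have hon : c.IsCycleOn (c.support : Set (Fin n)) := by
    rw [Equiv.Perm.coe_support_eq_set_support]
    exact hc.isCycleOn
  have hmem : j ∈ c.support := Equiv.Perm.mem_support.2 hj
  have hinj : Function.Injective (fun i : Fin k => (c ^ (i : ℕ)) j) := by
    intro a b hab
    have := (hon.pow_apply_eq_pow_apply hmem).1 hab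
    rw [hk] at this
    exact Fin.ext (this.eq_of_lt_of_lt a.isLt b.isLt)
  unfold permCost
  calc ∑ i : Fin k, (orbitSteps j k c i).natAbs
      = ∑ x ∈ Finset.univ.map ⟨_, hinj⟩, (((c x : ℕ) : ℤ) - ((x : ℕ) : ℤ)).natAbs := by
        rw [Finset.sum_map]
        refine Finset.sum_congr rfl fun i _ => ?_
        simp [orbitSteps, pow_succ']
    _ ≤ _ := Finset.sum_le_sum_of_subset (Finset.subset_univ _)

lemma orbitSteps_inj {n : ℕ} {j : Fin n} {k : ℕ} {c c' : Equiv.Perm (Fin n)} (hc : c.IsCycle)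
    (hj : c j ≠ j) (hk : c.support.card = k) (hc' : c'.IsCycle)
    (h : orbitSteps j k c = orbitSteps j k c') : c = c' := by
  have hpow : ∀ i ≤ k, (c ^ i) j = (c' ^ i) j := by
    intro i
    induction i with
    | zero => intro _; rfl
    | succ i ih =>
      intro hi
      have h1 := congrFun h ⟨i, hi⟩
      have h2 := ih (by omega)
      simp only [orbitSteps, h2] at h1
      exact Fin.ext (by omega)
  have hon : c.IsCycleOn (c.support : Set (Fin n)) := by
    rw [Equiv.Perm.coe_support_eq_set_support]
    exact hc.isCycleOn
  have hmem : j ∈ c.support := Equiv.Perm.mem_support.2 hj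
  have hval : ∀ x ∈ c.support, c x = c' x := by
    intro x hx
    obtain ⟨i, hi, rfl⟩ := hon.exists_pow_eq hmem hx
    rw [← Equiv.Perm.mul_apply, ← pow_succ', hpow (i + 1) (by omega), hpow i (by omega), pow_succ',
      Equiv.Perm.mul_apply]
  refine hc.support_congr hc' (fun x hx => ?_) hval
  rw [Equiv.Perm.mem_support, ← hval x hx]
  exact Equiv.Perm.mem_support.1 hx

/-- A `k`-cycle through `j` is determined by its `k` nonzero orbit increments, so its total
`4⁻¹`-weight is at most that of all `k`-tuples of nonzero integers. -/
lemma sum_cycles_card_le {n : ℕ} (j : Fin n) (k : ℕ) :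
    ∑ c ∈ Finset.univ.filter
      (fun c : Equiv.Perm (Fin n) => IsCycleThrough j c ∧ c.support.card = k),
      (1 / 4 : ℝ) ^ permCost c ≤ (2 / 3) ^ k := by
  rcases Nat.eq_zero_or_pos k with rfl | hk
  · calc _ ≤ ∑ c ∈ ({1} : Finset (Equiv.Perm (Fin n))), (1 / 4 : ℝ) ^ permCost c := by
          refine Finset.sum_le_sum_of_subset_of_nonneg (fun c hc => ?_) (fun _ _ _ => by positivity)
          simpa using (Finset.mem_filter.1 hc).2.2
      _ ≤ _ := by simp [permCost]
  · set S := Finset.univ.filter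
      (fun c : Equiv.Perm (Fin n) => IsCycleThrough j c ∧ c.support.card = k) with hS
    have hcyc : ∀ c ∈ S, c.IsCycle ∧ c j ≠ j ∧ c.support.card = k := by
      intro c hc
      obtain ⟨-, h | h, h'⟩ := Finset.mem_filter.1 hc
      · subst h
        simp at h'
        omega
      · exact ⟨h.1, h.2, h'⟩
    calc ∑ c ∈ S, (1 / 4 : ℝ) ^ permCost c
        ≤ ∑ c ∈ S, ∏ i : Fin k, (1 / 4 : ℝ) ^ (orbitSteps j k c i).natAbs := by
          refine Finset.sum_le_sum fun c hc => ?_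
          obtain ⟨h1, h2, h3⟩ := hcyc c hc
          rw [Finset.prod_pow_eq_pow_sum]
          exact pow_le_pow_of_le_one (by norm_num) (by norm_num) (sum_orbitSteps_le h1 h2 h3)
      _ = ∑ d ∈ S.image (orbitSteps j k), ∏ i : Fin k, (1 / 4 : ℝ) ^ (d i).natAbs := by
          rw [Finset.sum_image]
          intro c hc c' hc' h
          obtain ⟨h1, h2, h3⟩ := hcyc c hc
          exact orbitSteps_inj h1 h2 h3 (hcyc c' hc').1 h
      _ ≤ ∑ d ∈ Fintype.piFinset (fun _ : Fin k => (Finset.Icc (-(n : ℤ)) n).erase 0),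
            ∏ i : Fin k, (1 / 4 : ℝ) ^ (d i).natAbs := by
          refine Finset.sum_le_sum_of_subset_of_nonneg ?_ (fun _ _ _ => by positivity)
          intro d hd
          obtain ⟨c, hc, rfl⟩ := Finset.mem_image.1 hd
          exact orbitSteps_mem (hcyc c hc).2.1
      _ = (∑ d ∈ (Finset.Icc (-(n : ℤ)) n).erase 0, (1 / 4 : ℝ) ^ d.natAbs) ^ k := by
          rw [← Finset.prod_univ_sum (fun _ : Fin k => (Finset.Icc (-(n : ℤ)) n).erase 0)
            (fun _ d => (1 / 4 : ℝ) ^ d.natAbs), Finset.prod_const, Finset.card_univ, Fintype.card_fin]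
      _ ≤ (2 / 3) ^ k :=
          pow_le_pow_left₀ (Finset.sum_nonneg fun _ _ => by positivity) (sum_quarter_pow_le n) k

lemma sum_cycles_le {n : ℕ} (j : Fin n) :
    ∑ c ∈ Finset.univ.filter (fun c : Equiv.Perm (Fin n) => IsCycleThrough j c),
      (1 / 4 : ℝ) ^ permCost c ≤ 3 := by
  rw [← Finset.sum_fiberwise_of_maps_to (t := Finset.range (n + 1)) (g := fun c => c.support.card)]
  · calc _ ≤ ∑ k ∈ Finset.range (n + 1), (2 / 3 : ℝ) ^ k := by
          refine Finset.sum_le_sum fun k _ => ?_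
          rw [Finset.filter_filter]
          exact sum_cycles_card_le j k
      _ ≤ 3 := by
          rw [geom_sum_eq (by norm_num)]
          have : (0 : ℝ) ≤ (2 / 3) ^ (n + 1) := by positivity
          rw [div_le_iff_of_neg (by norm_num)]
          linarith
  · intro c _
    have := Finset.card_le_univ c.support
    rw [Fintype.card_fin] at this
    exact Finset.mem_range.2 (by omega)

lemma isCycleThrough_cycleOf {n : ℕ} (j : Fin n) (σ : Equiv.Perm (Fin n)) :
    IsCycleThrough j (σ.cycleOf j) := by
  by_cases h : σ j = j
  · exact Or.inl ((Equiv.Perm.cycleOf_eq_one_iff σ).2 h)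
  · exact Or.inr ⟨Equiv.Perm.isCycle_cycleOf σ h, by rwa [Equiv.Perm.cycleOf_apply_self]⟩

lemma disjoint_mul_inv_cycleOf {n : ℕ} (j : Fin n) (σ : Equiv.Perm (Fin n)) :
    Equiv.Perm.Disjoint (σ * (σ.cycleOf j)⁻¹) (σ.cycleOf j) := by
  by_cases h : σ j = j
  · rw [(Equiv.Perm.cycleOf_eq_one_iff σ).2 h]
    exact Equiv.Perm.disjoint_one_right _
  · exact Equiv.Perm.disjoint_mul_inv_of_mem_cycleFactorsFinset
      (Equiv.Perm.cycleOf_mem_cycleFactorsFinset_iff.2 (Equiv.Perm.mem_support.2 h))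

/-- Exponential moment bound for the cost of the cycle of `j` under the Mallows measure: deleting
that cycle from `σ` is injective when the cycle is remembered, and divides the weight by
`exp (-β * cost)`. -/
lemma sum_weight_cycle_le {n : ℕ} (β : ℝ) (j : Fin n) :
    ∑ σ : Equiv.Perm (Fin n),
      mallowsWeight n β σ * Real.exp ((β - Real.log 4) * permCost (σ.cycleOf j))
      ≤ 3 * ∑ τ : Equiv.Perm (Fin n), mallowsWeight n β τ := by
  set T := Finset.univ.filter (fun c : Equiv.Perm (Fin n) => IsCycleThrough j c) with hT
  have hexp : ∀ m : ℕ, Real.exp (-Real.log 4 * m) = (1 / 4 : ℝ) ^ m := by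
    intro m
    rw [mul_comm, Real.exp_nat_mul, Real.exp_neg, Real.exp_log (by norm_num)]
    norm_num
  have hinj : Function.Injective
      (fun σ : Equiv.Perm (Fin n) => (σ * (σ.cycleOf j)⁻¹, σ.cycleOf j)) := by
    intro σ τ h
    simp only [Prod.mk.injEq] at h
    obtain ⟨h1, h2⟩ := h
    rw [h2] at h1
    exact mul_right_cancel h1
  calc _ = ∑ σ : Equiv.Perm (Fin n), mallowsWeight n β (σ * (σ.cycleOf j)⁻¹) *
          (1 / 4 : ℝ) ^ permCost (σ.cycleOf j) := by
        refine Finset.sum_congr rfl fun σ _ => ?_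
        have h := permCost_mul_of_disjoint (disjoint_mul_inv_cycleOf j σ)
        rw [inv_mul_cancel_right] at h
        rw [mallowsWeight_eq, mallowsWeight_eq, ← hexp, ← Real.exp_add, ← Real.exp_add, h]
        congr 1
        push_cast
        ring
    _ = ∑ p ∈ Finset.univ.map ⟨_, hinj⟩, mallowsWeight n β p.1 * (1 / 4 : ℝ) ^ permCost p.2 := by
        rw [Finset.sum_map]
        rfl
    _ ≤ ∑ p ∈ Finset.univ ×ˢ T, mallowsWeight n β p.1 * (1 / 4 : ℝ) ^ permCost p.2 := by
        refine Finset.sum_le_sum_of_subset_of_nonneg ?_ (fun p _ _ => ?_)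
        · intro p hp
          obtain ⟨σ, -, rfl⟩ := Finset.mem_map.1 hp
          simpa [hT] using isCycleThrough_cycleOf j σ
        · unfold mallowsWeight
          positivity
    _ = (∑ τ : Equiv.Perm (Fin n), mallowsWeight n β τ) * ∑ c ∈ T, (1 / 4 : ℝ) ^ permCost c := by
        rw [Finset.sum_product, Finset.sum_mul_sum]
    _ ≤ (∑ τ : Equiv.Perm (Fin n), mallowsWeight n β τ) * 3 := by
        refine mul_le_mul_of_nonneg_left (sum_cycles_le j) (Finset.sum_nonneg fun τ _ => ?_)
        unfold mallowsWeight
        positivity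
    _ = _ := mul_comm _ _

/-! ### Tail bound for a single `b_j` -/

/-- The exponential tail bound, at any rate `2γ` not larger than the true rate `2β`; the smaller
rate makes it hold for negative thresholds with the same formula. -/
lemma expMeasure_Ici_le {β γ : ℝ} (hβ : 0 < β) (hγ : 0 ≤ γ) (hγβ : γ ≤ β) (x : ℝ) :
    ProbabilityTheory.expMeasure (2 * β) (Set.Ici x) ≤ ENNReal.ofReal (Real.exp (-(2 * γ) * x)) := by
  have hr : 0 < 2 * β := by positivity
  have : IsProbabilityMeasure (ProbabilityTheory.expMeasure (2 * β)) :=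
    ProbabilityTheory.isProbabilityMeasure_expMeasure hr
  rcases lt_or_ge x 0 with hx | hx
  · refine prob_le_one.trans ?_
    rw [ENNReal.one_le_ofReal]
    exact Real.one_le_exp (by nlinarith)
  · have hac : ProbabilityTheory.expMeasure (2 * β) ≪ volume :=
      withDensity_absolutelyContinuous _ _
    have h1 : ProbabilityTheory.expMeasure (2 * β) (Set.Ici x)
        = ProbabilityTheory.expMeasure (2 * β) (Set.Ioi x) :=
      (measure_congr (hac.ae_eq Ioi_ae_eq_Ici)).symm
    rw [h1, ← Set.compl_Iic, prob_compl_eq_one_sub measurableSet_Iic,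
      ← ProbabilityTheory.ofReal_cdf, ProbabilityTheory.cdf_expMeasure_eq hr, if_pos hx,
      ← ENNReal.ofReal_one, ← ENNReal.ofReal_sub]
    · refine ENNReal.ofReal_le_ofReal ?_
      rw [sub_sub_cancel]
      exact Real.exp_le_exp.2 (by nlinarith)
    · rw [sub_nonneg]
      exact Real.exp_le_one_iff.2 (by nlinarith)

lemma measurableSet_bVal (n : ℕ) (j l : Fin n) :
    MeasurableSet {ω : Equiv.Perm (Fin n) × (Fin n → ℝ) | ((l : ℕ) : ℝ) ≤ bVal n ω j} := by
  refine measurableSet_le measurable_const ?_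
  unfold bVal
  refine Measurable.add ?_ ((measurable_pi_apply j).comp measurable_snd)
  have h : Measurable (fun σ : Equiv.Perm (Fin n) => max ((j : ℕ) : ℝ) ((σ j : ℕ) : ℝ)) :=
    measurable_from_top
  exact h.comp measurable_fst

lemma log_four_lt_two : Real.log 4 < 2 := by
  rw [Real.log_lt_iff_lt_exp (by norm_num)]
  have h : Real.exp 2 = Real.exp 1 ^ 2 := by rw [← Real.exp_nat_mul]; norm_num
  have := Real.exp_one_gt_d9
  nlinarith

/-- Each `j` at distance `l - j` below `l` lies in `H_l` with probability at most
`3 (16 e^{-2β})^{l-j}`. -/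
lemma hitRun_bVal_le {n : ℕ} {β : ℝ} (hβ : 2 ≤ β) {j l : Fin n} (hjl : j < l) :
    hitRunMeasure n β {ω | ((l : ℕ) : ℝ) ≤ bVal n ω j}
      ≤ ENNReal.ofReal (3 * (16 * Real.exp (-(2 * β))) ^ ((l : ℕ) - (j : ℕ))) := by
  have hr : 0 < 2 * β := by linarith
  have : IsProbabilityMeasure (ProbabilityTheory.expMeasure (2 * β)) :=
    ProbabilityTheory.isProbabilityMeasure_expMeasure hr
  set γ := β - Real.log 4 with hγ
  have hγ0 : 0 ≤ γ := by linarith [log_four_lt_two]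
  have hγβ : γ ≤ β := by
    have : 0 ≤ Real.log 4 := Real.log_nonneg (by norm_num)
    linarith
  set Z := ∑ τ : Equiv.Perm (Fin n), mallowsWeight n β τ with hZ
  have hw : ∀ τ : Equiv.Perm (Fin n), 0 < mallowsWeight n β τ := fun τ => Real.exp_pos _
  have hZpos : 0 < Z := Finset.sum_pos (fun τ _ => hw τ) Finset.univ_nonempty
  set L := (l : ℕ) - (j : ℕ) with hL
  have hLr : (L : ℝ) = ((l : ℕ) : ℝ) - ((j : ℕ) : ℝ) := by
    rw [hL, Nat.cast_sub (le_of_lt hjl)]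
  -- Conditionally on `σ`, the tail of `E_j` is at most `e^{-2γL}` times the moment integrand.
  have hcond : ∀ σ : Equiv.Perm (Fin n),
      (Measure.pi fun _ : Fin n => ProbabilityTheory.expMeasure (2 * β))
        (Prod.mk σ ⁻¹' {ω | ((l : ℕ) : ℝ) ≤ bVal n ω j})
      ≤ ENNReal.ofReal (Real.exp (-(2 * γ) * L) * Real.exp (γ * permCost (σ.cycleOf j))) := by
    intro σ
    set x : ℝ := ((l : ℕ) : ℝ) - max ((j : ℕ) : ℝ) ((σ j : ℕ) : ℝ) with hx
    have hset : (Prod.mk σ ⁻¹' {ω : Equiv.Perm (Fin n) × (Fin n → ℝ) |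
        ((l : ℕ) : ℝ) ≤ bVal n ω j}) = Function.eval j ⁻¹' Set.Ici x := by
      ext e
      simp only [Set.mem_preimage, Set.mem_ofPred_eq, bVal, Function.eval, Set.mem_Ici, hx]
      rw [sub_le_iff_le_add']
    rw [hset, (measurePreserving_eval
      (fun _ : Fin n => ProbabilityTheory.expMeasure (2 * β)) j).measure_preimage
        measurableSet_Ici.nullMeasurableSet]
    refine (expMeasure_Ici_le (by linarith) hγ0 hγβ x).trans (ENNReal.ofReal_le_ofReal ?_)
    rw [← Real.exp_add]
    refine Real.exp_le_exp.2 ?_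
    have h1 : 2 * (((σ j : ℕ) : ℝ) - ((j : ℕ) : ℝ)) ≤ permCost (σ.cycleOf j) := by
      have := two_mul_displacement_le (σ.cycleOf j) j
      rw [Equiv.Perm.cycleOf_apply_self] at this
      exact_mod_cast this
    have h2 : (0 : ℝ) ≤ permCost (σ.cycleOf j) := Nat.cast_nonneg _
    have h3 : 2 * ((L : ℝ) - x) ≤ permCost (σ.cycleOf j) := by
      rw [hLr, hx]
      rcases max_cases ((j : ℕ) : ℝ) ((σ j : ℕ) : ℝ) with ⟨h, -⟩ | ⟨h, -⟩ <;> rw [h] <;> linarith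
    nlinarith
  have hpow : Real.exp (-(2 * γ) * L) = (16 * Real.exp (-(2 * β))) ^ L := by
    rw [mul_comm, Real.exp_nat_mul]
    congr 1
    have : -(2 * γ) = Real.log 4 + Real.log 4 + -(2 * β) := by rw [hγ]; ring
    rw [this, Real.exp_add, Real.exp_add, Real.exp_log (by norm_num)]
    norm_num
  rw [hitRunMeasure, Measure.prod_apply (measurableSet_bVal n j l), mallowsMeasure,
    lintegral_finsetSum_measure]
  calc _ ≤ ∑ σ : Equiv.Perm (Fin n), ENNReal.ofReal (mallowsProb n β σ *
        (Real.exp (-(2 * γ) * L) * Real.exp (γ * permCost (σ.cycleOf j)))) := by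
        refine Finset.sum_le_sum fun σ _ => ?_
        rw [lintegral_smul_measure, lintegral_dirac' _ measurable_from_top, smul_eq_mul,
          ENNReal.ofReal_mul (show 0 ≤ mallowsProb n β σ from div_nonneg (hw σ).le hZpos.le)]
        gcongr
        exact hcond σ
    _ = ENNReal.ofReal (∑ σ : Equiv.Perm (Fin n), mallowsProb n β σ *
        (Real.exp (-(2 * γ) * L) * Real.exp (γ * permCost (σ.cycleOf j)))) := by
        rw [ENNReal.ofReal_sum_of_nonneg]
        intro σ _
        exact mul_nonneg (div_nonneg (hw σ).le hZpos.le) (by positivity)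
    _ ≤ _ := by
        refine ENNReal.ofReal_le_ofReal ?_
        have h := sum_weight_cycle_le β j
        rw [← hγ, ← hZ] at h
        have h' : ∑ σ : Equiv.Perm (Fin n), mallowsProb n β σ *
            (Real.exp (-(2 * γ) * L) * Real.exp (γ * permCost (σ.cycleOf j)))
            = (∑ σ : Equiv.Perm (Fin n), mallowsWeight n β σ *
              Real.exp (γ * permCost (σ.cycleOf j))) / Z * Real.exp (-(2 * γ) * L) := by
          rw [Finset.sum_div, Finset.sum_mul]
          refine Finset.sum_congr rfl fun σ _ => ?_
          rw [mallowsProb, ← hZ]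
          ring
        rw [h', hpow]
        refine mul_le_mul_of_nonneg_right ?_ (by positivity)
        rwa [div_le_iff₀ hZpos]

/-! ### From `K_{t,r}` to a union over pairs -/

/-- If every element of `H_l` is within `r - 1` of `l`, then both constraints defining `K_{t,r}`
hold at `l`: `H_l` consists of distinct indices below `l`, so it has at most `r - 1` elements. -/
lemma constraints_of_close {n : ℕ} {ω : Equiv.Perm (Fin n) × (Fin n → ℝ)} {l : Fin n} {r : ℝ}
    (hr : 2 ≤ r) (h : ∀ j ∈ Hset n ω l, (((l : ℕ) - (j : ℕ) : ℕ) : ℝ) ≤ r - 1) :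
    ((((Hset n ω l).sup fun j => (l : ℕ) - (j : ℕ)) : ℕ) : ℝ) ≤ r ∧ (Nval n ω l : ℝ) ≤ r := by
  have hr1 : 0 ≤ r - 1 := by linarith
  have hm : ∀ j ∈ Hset n ω l, (l : ℕ) - (j : ℕ) ≤ ⌊r - 1⌋₊ := fun j hj => Nat.le_floor (h j hj)
  have hfl : (⌊r - 1⌋₊ : ℝ) ≤ r - 1 := Nat.floor_le hr1
  have hlt : ∀ j ∈ Hset n ω l, (j : ℕ) < (l : ℕ) := fun j hj => (Finset.mem_filter.1 hj).2.1
  constructor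
  · have : (Hset n ω l).sup (fun j => (l : ℕ) - (j : ℕ)) ≤ ⌊r - 1⌋₊ := Finset.sup_le hm
    have : (((Hset n ω l).sup (fun j => (l : ℕ) - (j : ℕ)) : ℕ) : ℝ) ≤ ⌊r - 1⌋₊ := by
      exact_mod_cast this
    linarith
  · have : (Hset n ω l).card ≤ (Finset.Icc 1 ⌊r - 1⌋₊).card := by
      refine Finset.card_le_card_of_injOn (fun j => (l : ℕ) - (j : ℕ)) (fun j hj => ?_) ?_
      · have h1 := hm j hj
        have h2 := hlt j hj
        simp only [Finset.coe_Icc, Set.mem_Icc]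
        omega
      · intro a ha b hb hab
        have h1 := hlt a ha
        have h2 := hlt b hb
        simp only at hab
        exact Fin.ext (by omega)
    rw [Nat.card_Icc, Nat.add_sub_cancel] at this
    have : ((Hset n ω l).card : ℝ) ≤ ⌊r - 1⌋₊ := by exact_mod_cast this
    rw [Nval]
    push_cast
    linarith

/-- The indices `l` constrained by `K_{t,r}` when `β ≥ 1`, with `x = r t`. -/
noncomputable def window {n : ℕ} (s : Fin n) (x : ℝ) : Finset (Fin n) :=
  Finset.univ.filter fun l => ((s : ℕ) : ℝ) - x ≤ ((l : ℕ) : ℝ) ∧ l ≤ s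

lemma card_window_le {n : ℕ} (s : Fin n) {x : ℝ} (hx : 0 ≤ x) :
    ((window s x).card : ℝ) ≤ x + 1 := by
  have : (window s x).card ≤ (Finset.Icc ((s : ℕ) - ⌊x⌋₊) (s : ℕ)).card := by
    refine Finset.card_le_card_of_injOn (fun l => (l : ℕ)) (fun l hl => ?_)
      (fun a _ b _ h => Fin.ext h)
    obtain ⟨-, h1, h2⟩ := Finset.mem_filter.1 hl
    have h2' : (l : ℕ) ≤ (s : ℕ) := h2
    have h3 : (s : ℕ) - (l : ℕ) ≤ ⌊x⌋₊ := by
      refine Nat.le_floor ?_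
      rw [Nat.cast_sub h2']
      linarith
    simp only [Finset.coe_Icc, Set.mem_Icc]
    omega
  rw [Nat.card_Icc] at this
  have h : (window s x).card ≤ ⌊x⌋₊ + 1 := by omega
  have h' : ((window s x).card : ℝ) ≤ ⌊x⌋₊ + 1 := by exact_mod_cast h
  linarith [Nat.floor_le hx]

/-- The indices below `l` at distance more than `r - 1`. -/
noncomputable def farBelow {n : ℕ} (l : Fin n) (r : ℝ) : Finset (Fin n) :=
  Finset.univ.filter fun j => j < l ∧ r - 1 < (((l : ℕ) - (j : ℕ) : ℕ) : ℝ)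

lemma sum_farBelow_le {n : ℕ} (l : Fin n) (r : ℝ) :
    ∑ j ∈ farBelow l r, (1 / 2 : ℝ) ^ ((l : ℕ) - (j : ℕ) - 1) ≤ 2 := by
  have hinj : Set.InjOn (fun j : Fin n => (l : ℕ) - (j : ℕ) - 1) (farBelow l r) := by
    intro a ha b hb hab
    have h1 : (a : ℕ) < l := (Finset.mem_filter.1 ha).2.1
    have h2 : (b : ℕ) < l := (Finset.mem_filter.1 hb).2.1
    simp only at hab
    exact Fin.ext (by omega)
  calc _ = ∑ i ∈ (farBelow l r).image (fun j : Fin n => (l : ℕ) - (j : ℕ) - 1), (1 / 2 : ℝ) ^ i :=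
        (Finset.sum_image (f := fun i => (1 / 2 : ℝ) ^ i) hinj).symm
    _ ≤ ∑ i ∈ Finset.range l, (1 / 2 : ℝ) ^ i := by
        refine Finset.sum_le_sum_of_subset_of_nonneg (fun i hi => ?_) (fun _ _ _ => by positivity)
        obtain ⟨j, hj, rfl⟩ := Finset.mem_image.1 hi
        have h1 : (j : ℕ) < l := (Finset.mem_filter.1 hj).2.1
        exact Finset.mem_range.2 (by omega)
    _ ≤ 2 := sum_geometric_two_le _

/-- The single-pair bound, split into the factors `e^{-2β}`, `e^{-(r-2)/4}` and a summable
geometric term, using `16 e^{-4} ≤ e^{-1/4} / 2`. -/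
lemma pair_bound_le {β : ℝ} (hβ : 2 ≤ β) {r : ℝ} {L : ℕ} (hL : 1 ≤ L) (hr : r - 1 < L) :
    3 * (16 * Real.exp (-(2 * β))) ^ L
      ≤ 48 * Real.exp (-(2 * β)) * Real.exp (-(r - 2) / 4) * (1 / 2) ^ (L - 1) := by
  obtain ⟨m, rfl⟩ : ∃ m, L = m + 1 := ⟨L - 1, by omega⟩
  have hq : 16 * Real.exp (-(2 * β)) ≤ Real.exp (-(1 / 4)) * (1 / 2) := by
    have h1 : Real.exp (-(2 * β)) ≤ Real.exp (-4) := Real.exp_le_exp.2 (by linarith)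
    have h2 : Real.exp 4 = Real.exp 1 ^ 4 := by rw [← Real.exp_nat_mul]; norm_num
    have h3 : (2.7 : ℝ) ^ 4 ≤ Real.exp 4 := by
      rw [h2]
      exact pow_le_pow_left₀ (by norm_num) (by linarith [Real.exp_one_gt_d9]) 4
    have h4 : Real.exp (-4) ≤ 1 / 50 := by
      rw [Real.exp_neg, one_div]
      exact inv_anti₀ (by norm_num) (by norm_num at h3 ⊢; linarith)
    have h5 := Real.add_one_le_exp (-(1 / 4 : ℝ))
    linarith
  have hpow : (16 * Real.exp (-(2 * β))) ^ m ≤ Real.exp (-(r - 2) / 4) * (1 / 2) ^ m := by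
    calc _ ≤ (Real.exp (-(1 / 4)) * (1 / 2)) ^ m := pow_le_pow_left₀ (by positivity) hq m
      _ = Real.exp (m * -(1 / 4)) * (1 / 2) ^ m := by rw [mul_pow, Real.exp_nat_mul]
      _ ≤ _ := by
        gcongr
        push_cast at hr
        linarith
  rw [Nat.add_sub_cancel, pow_succ]
  have := mul_le_mul_of_nonneg_left hpow (show 0 ≤ 48 * Real.exp (-(2 * β)) by positivity)
  linarith

/-- There are absolute constants `C, c > 0` such that for all `n ≥ 1`, `β ≥ 2`,
`s ∈ [n]`, `t ∈ [n]`, and real `r ≥ 2`: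
`P((K_{t,r})ᶜ) ≤ C r t exp(-2β - c √r)`. -/
theorem statement15 :
    ∃ C c : ℝ, 0 < C ∧ 0 < c ∧
      ∀ n : ℕ, 0 < n → ∀ β : ℝ, 2 ≤ β → ∀ s : Fin n, ∀ t : ℕ, 1 ≤ t → t ≤ n →
        ∀ r : ℝ, 2 ≤ r →
          hitRunMeasure n β (Kevent n β s t r)ᶜ
            ≤ ENNReal.ofReal
                (C * r * t * Real.exp (-(2 * β) - c * Real.sqrt r)) := by
  refine ⟨192 * Real.exp (1 / 2), 1 / 4, by positivity, by norm_num, ?_⟩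
  intro n _ β hβ s t ht _ r hr
  have hmin : min β 1 = 1 := min_eq_right (by linarith)
  have ht1 : (1 : ℝ) ≤ t := by exact_mod_cast ht
  have hrt : 1 ≤ r * t := by nlinarith
  have hsub : (Kevent n β s t r)ᶜ ⊆ ⋃ l ∈ window s (r * t), ⋃ j ∈ farBelow l r,
      {ω | ((l : ℕ) : ℝ) ≤ bVal n ω j} := by
    intro ω hω
    by_contra hcon
    apply hω
    intro l hl hls
    rw [hmin, one_pow, inv_one, mul_one] at hl
    rw [hmin, inv_one, mul_one]
    refine constraints_of_close hr fun j hj => ?_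
    by_contra hfar
    obtain ⟨-, hjl, hb⟩ := Finset.mem_filter.1 hj
    refine hcon (Set.mem_iUnion₂.2 ⟨l, Finset.mem_filter.2 ⟨Finset.mem_univ _, hl, hls⟩,
      Set.mem_iUnion₂.2 ⟨j, Finset.mem_filter.2 ⟨Finset.mem_univ _, hjl, not_le.1 hfar⟩, hb⟩⟩)
  set A := 48 * Real.exp (-(2 * β)) * Real.exp (-(r - 2) / 4) with hA
  have hA0 : 0 ≤ A := by positivity
  have hl : ∀ l : Fin n, hitRunMeasure n β (⋃ j ∈ farBelow l r, {ω | ((l : ℕ) : ℝ) ≤ bVal n ω j})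
      ≤ ENNReal.ofReal (A * 2) := by
    intro l
    calc _ ≤ ∑ j ∈ farBelow l r, hitRunMeasure n β {ω | ((l : ℕ) : ℝ) ≤ bVal n ω j} :=
          measure_biUnion_finset_le _ _
      _ ≤ ∑ j ∈ farBelow l r, ENNReal.ofReal (A * (1 / 2) ^ ((l : ℕ) - (j : ℕ) - 1)) := by
          refine Finset.sum_le_sum fun j hj => ?_
          obtain ⟨-, hjl, hfar⟩ := Finset.mem_filter.1 hj
          have hjl' : (j : ℕ) < l := hjl
          exact (hitRun_bVal_le hβ hjl).trans
            (ENNReal.ofReal_le_ofReal (pair_bound_le hβ (by omega) hfar))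
      _ = ENNReal.ofReal (A * ∑ j ∈ farBelow l r, (1 / 2) ^ ((l : ℕ) - (j : ℕ) - 1)) := by
          rw [Finset.mul_sum, ENNReal.ofReal_sum_of_nonneg fun _ _ => by positivity]
      _ ≤ _ := ENNReal.ofReal_le_ofReal (mul_le_mul_of_nonneg_left (sum_farBelow_le l r) hA0)
  calc _ ≤ _ := measure_mono hsub
    _ ≤ ∑ l ∈ window s (r * t),
        hitRunMeasure n β (⋃ j ∈ farBelow l r, {ω | ((l : ℕ) : ℝ) ≤ bVal n ω j}) :=
        measure_biUnion_finset_le _ _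
    _ ≤ ∑ l ∈ window s (r * t), ENNReal.ofReal (A * 2) := Finset.sum_le_sum fun l _ => hl l
    _ = ENNReal.ofReal ((window s (r * t)).card * (A * 2)) := by
        rw [Finset.sum_const, nsmul_eq_mul, ENNReal.ofReal_mul (Nat.cast_nonneg _),
          ENNReal.ofReal_natCast]
    _ ≤ _ := by
        refine ENNReal.ofReal_le_ofReal ?_
        have hcard : ((window s (r * t)).card : ℝ) ≤ 2 * (r * t) := by
          linarith [card_window_le s (x := r * t) (by linarith)]
        have hsqrt : Real.sqrt r ≤ r := Real.sqrt_le_iff.2 ⟨by linarith, by nlinarith⟩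
        have hA' : A ≤ 48 * (Real.exp (1 / 2) * Real.exp (-(2 * β) - 1 / 4 * Real.sqrt r)) := by
          rw [hA, mul_assoc, ← Real.exp_add, ← Real.exp_add]
          exact mul_le_mul_of_nonneg_left (Real.exp_le_exp.2 (by linarith)) (by norm_num)
        calc _ ≤ 2 * (r * t) * (A * 2) := by gcongr
          _ ≤ 2 * (r * t) *
              (48 * (Real.exp (1 / 2) * Real.exp (-(2 * β) - 1 / 4 * Real.sqrt r)) * 2) := by gcongr
          _ = _ := by ring
end

section
/- There exists a positive absolute constant C such that for every positive integer n, every β > 0, and every s ∈ [n], if σ is a random permutation with law P_{n,β}, then E[s - min(C_s(σ))] ≤ C · min{e^{-2β} max{β^{-2}, 1}, s - 1}. -/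
/-!
Write `q = e^{-2β}`, `L = 2 / (1 - q)`, and let `D_j(σ)` be the number of arcs `i → σ i` crossing
the cut between `j` and `j + 1` upwards. The core of the proof is the hazard bound
`P(min C_s ≤ j) ≤ 22 L² P(min C_s = j)` for every `j < s` (`hazard`), obtained from two
double-counting arguments.

* Uncrossing (`sum_uncross_le`, `sum_crossNum_sq_le`): let the cycle of `s` pass below the cut, and
  take an upward arc and a downward arc over the cut, the latter not being the first descent of the
  cycle of `s`. There are at least `(D_j - 1)²` such pairs. Uncrossing one of them preserves the
  event and increases the weight by `q ^ (-gap)`; summing `q ^ gap` over the possible preimages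
  gives at most `q L²`. So `E[(D_j - 1)² ; min C_s ≤ j] ≤ L² P(min C_s ≤ j)`: the crossing number
  is typically of order `L`.
* Closing (`sum_close_le`): let `c` be the first point `≤ j` on the cycle after `s`, and `a` the
  last one before it returns to `s`. In `(j c) ∘ σ ∘ (j a)` the whole excursion between `c` and `a`
  is replaced by the single point `j`, so the cycle of `s` has minimum `j`. This map preserves
  `D_j`, does not decrease the weight, and its weighted multiplicity is at most `(D_j + L)²`.

Summing the hazard bound over the cuts `j < s` yields
`E[s - min C_s] = ∑_{j<s} P(min C_s ≤ j) ≤ 22 L² P(min C_s < s)`. For `β ≤ 1` the last probability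
is bounded by `1` and `L ≤ 3/β`; for `β ≥ 1` uncrossing any pair of arcs over the cut before `s`
gives `P(min C_s < s) ≤ q L²` (`sum_reaches_le`), and `L ≤ 3`. The bound by `s - 1` is trivial.
-/

open scoped BigOperators Classical

/-- Expectation of `f` under `P_{n,β}`. -/
noncomputable def mallowsE (n : ℕ) (β : ℝ) (f : Equiv.Perm (Fin n) → ℝ) : ℝ :=
  ∑ σ : Equiv.Perm (Fin n), f σ * mallowsProb n β σ

/-- The set of points of the cycle of `σ` containing `s`: `{σ^k(s) : k ≥ 0}`. -/
noncomputable def cycleFinset (n : ℕ) (σ : Equiv.Perm (Fin n)) (s : Fin n) :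
    Finset (Fin n) :=
  Finset.univ.filter fun x => ∃ k : ℕ, (σ ^ k) s = x

lemma cycleFinset_nonempty (n : ℕ) (σ : Equiv.Perm (Fin n)) (s : Fin n) :
    (cycleFinset n σ s).Nonempty :=
  ⟨s, Finset.mem_filter.mpr ⟨Finset.mem_univ s, ⟨0, by simp⟩⟩⟩

noncomputable section

/-! ### Weights of permutations multiplied by a transposition -/

lemma mallowsWeight_pos (n : ℕ) (β : ℝ) (σ : Equiv.Perm (Fin n)) : 0 < mallowsWeight n β σ :=
  Real.exp_pos _

lemma mallowsWeight_inv (n : ℕ) (β : ℝ) (σ : Equiv.Perm (Fin n)) :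
    mallowsWeight n β σ⁻¹ = mallowsWeight n β σ := by
  unfold mallowsWeight
  congr 2
  rw [← Equiv.sum_comp σ]
  refine Finset.sum_congr rfl fun i _ => ?_
  simp [abs_sub_comm]

lemma mallowsWeight_mul_swap (n : ℕ) (β : ℝ) (σ : Equiv.Perm (Fin n)) (a b : Fin n)
    (hab : a ≠ b) :
    mallowsWeight n β (σ * Equiv.swap a b) = mallowsWeight n β σ *
      Real.exp (-β * (|((σ b : ℕ) : ℝ) - (a : ℕ)| + |((σ a : ℕ) : ℝ) - (b : ℕ)|
        - |((σ a : ℕ) : ℝ) - (a : ℕ)| - |((σ b : ℕ) : ℝ) - (b : ℕ)|)) := by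
  have h := Fintype.sum_eq_add (f := fun i : Fin n =>
      |(((σ * Equiv.swap a b) i : ℕ) : ℝ) - (i : ℕ)| - |((σ i : ℕ) : ℝ) - (i : ℕ)|) a b hab
    (by
      rintro x ⟨hxa, hxb⟩
      simp [Equiv.swap_apply_of_ne_of_ne hxa hxb])
  rw [Finset.sum_sub_distrib] at h
  simp only [Equiv.Perm.mul_apply, Equiv.swap_apply_left, Equiv.swap_apply_right] at h
  unfold mallowsWeight
  rw [← Real.exp_add]
  congr 1
  simp only [Equiv.Perm.mul_apply]
  linear_combination (-β) * h

/-! ### Geometric kernels -/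

/-- The kernel `q ^ (j - x)` on points `x ≤ j`, where `q = e^{-2β}`, extended by zero. -/
def leftKer {n : ℕ} (β : ℝ) (j x : Fin n) : ℝ :=
  if x ≤ j then Real.exp (-(2 * β) * (((j : ℕ) : ℝ) - (x : ℕ))) else 0

/-- The kernel `q ^ (x - j)` on points `x > j`, where `q = e^{-2β}`, extended by zero. -/
def rightKer {n : ℕ} (β : ℝ) (j x : Fin n) : ℝ :=
  if j < x then Real.exp (-(2 * β) * (((x : ℕ) : ℝ) - (j : ℕ))) else 0

lemma leftKer_nonneg {n : ℕ} (β : ℝ) (j x : Fin n) : 0 ≤ leftKer β j x := by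
  unfold leftKer; split_ifs <;> positivity

lemma rightKer_nonneg {n : ℕ} (β : ℝ) (j x : Fin n) : 0 ≤ rightKer β j x := by
  unfold rightKer; split_ifs <;> positivity

lemma sum_geom_inj_le {ι : Type*} (s : Finset ι) (f : ι → ℕ) (hf : Set.InjOn f s) {q : ℝ}
    (h0 : 0 ≤ q) (h1 : q < 1) : ∑ x ∈ s, q ^ f x ≤ (1 - q)⁻¹ := by
  rw [← Finset.sum_image (f := fun m => q ^ m) hf, ← tsum_geometric_of_lt_one h0 h1]
  exact (summable_geometric_of_lt_one h0 h1).sum_le_tsum _ (fun i _ => by positivity)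

lemma exp_lt_one_of_pos {β : ℝ} (hβ : 0 < β) : Real.exp (-(2 * β)) < 1 := by
  rw [Real.exp_lt_one_iff]; linarith

lemma sum_leftKer_le {n : ℕ} {β : ℝ} (hβ : 0 < β) (j : Fin n) :
    ∑ x, leftKer β j x ≤ (1 - Real.exp (-(2 * β)))⁻¹ := by
  unfold leftKer
  rw [← Finset.sum_filter]
  refine le_trans (le_of_eq ?_) (sum_geom_inj_le (Finset.univ.filter (fun x : Fin n => x ≤ j))
    (fun x => (j : ℕ) - (x : ℕ)) ?_ (Real.exp_pos _).le (exp_lt_one_of_pos hβ))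
  · refine Finset.sum_congr rfl fun x hx => ?_
    have hx' : (x : ℕ) ≤ j := (Finset.mem_filter.mp hx).2
    rw [← Real.exp_nat_mul, Nat.cast_sub hx', mul_comm]
  · intro x hx y hy hxy
    have hx' : (x : ℕ) ≤ j := by simpa using hx
    have hy' : (y : ℕ) ≤ j := by simpa using hy
    ext
    simp only at hxy
    omega

lemma sum_rightKer_le {n : ℕ} {β : ℝ} (hβ : 0 < β) (j : Fin n) :
    ∑ x, rightKer β j x ≤ Real.exp (-(2 * β)) * (1 - Real.exp (-(2 * β)))⁻¹ := by
  unfold rightKer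
  rw [← Finset.sum_filter]
  refine le_trans (le_of_eq ?_) (mul_le_mul_of_nonneg_left
    (sum_geom_inj_le (Finset.univ.filter (fun x : Fin n => j < x))
    (fun x => (x : ℕ) - (j : ℕ) - 1) ?_ (Real.exp_pos _).le (exp_lt_one_of_pos hβ))
    (Real.exp_pos _).le)
  · rw [Finset.mul_sum]
    refine Finset.sum_congr rfl fun x hx => ?_
    have hx' : (j : ℕ) < x := (Finset.mem_filter.mp hx).2
    rw [← pow_succ', Nat.sub_add_cancel (by omega), ← Real.exp_nat_mul,
      Nat.cast_sub hx'.le, mul_comm]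
  · intro x hx y hy hxy
    have hx' : (j : ℕ) < x := by simpa using hx
    have hy' : (j : ℕ) < y := by simpa using hy
    ext
    simp only at hxy
    omega

/-- The length scale `2 / (1 - e^{-2β})`, comparable to `max (1/β) 1`. -/
def scale (β : ℝ) : ℝ := 2 * (1 - Real.exp (-(2 * β)))⁻¹

lemma two_le_scale {β : ℝ} (hβ : 0 < β) : 2 ≤ scale β := by
  have h1 := exp_lt_one_of_pos hβ
  have : 1 ≤ (1 - Real.exp (-(2 * β)))⁻¹ :=
    (one_le_inv₀ (by linarith)).mpr (by linarith [Real.exp_pos (-(2 * β))])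
  unfold scale; linarith

lemma sum_leftKer_add_le {n : ℕ} {β : ℝ} (hβ : 0 < β) (j : Fin n) (σ : Equiv.Perm (Fin n)) :
    ∑ a, (leftKer β j a + leftKer β j (σ a)) ≤ scale β := by
  rw [Finset.sum_add_distrib, Equiv.sum_comp σ (leftKer β j)]
  have := sum_leftKer_le hβ j
  unfold scale; linarith

lemma sum_rightKer_add_le {n : ℕ} {β : ℝ} (hβ : 0 < β) (j : Fin n) (σ : Equiv.Perm (Fin n)) :
    ∑ a, (rightKer β j a + rightKer β j (σ a)) ≤ Real.exp (-(2 * β)) * scale β := by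
  rw [Finset.sum_add_distrib, Equiv.sum_comp σ (rightKer β j)]
  have := sum_rightKer_le hβ j
  unfold scale; linarith

/-! ### Uncrossing a pair of arcs over a cut -/

/-- Crossing two uncrossed arcs `a → σ a` (inside `[0, j]`) and `b → σ b` (to the right of `j`)
costs a factor `q ^ (min b (σ b) - max a (σ a))`, here bounded by replacing the minimum and the
maximum by sums of kernels. -/
lemma mallowsWeight_cross_le {n : ℕ} (β : ℝ) (j : Fin n)
    (σ : Equiv.Perm (Fin n)) (a b : Fin n) (ha : a ≤ j) (hσa : σ a ≤ j) (hb : j < b)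
    (hσb : j < σ b) :
    mallowsWeight n β (σ * Equiv.swap a b) ≤ mallowsWeight n β σ *
      ((leftKer β j a + leftKer β j (σ a)) * (rightKer β j b + rightKer β j (σ b))) := by
  rw [mallowsWeight_mul_swap n β σ a b (ha.trans_lt hb).ne]
  refine mul_le_mul_of_nonneg_left ?_ (mallowsWeight_pos n β σ).le
  simp only [leftKer, rightKer, ha, hσa, hb, hσb, if_true]
  have ha' : ((a : ℕ) : ℝ) ≤ (j : ℕ) := by exact_mod_cast ha
  have hσa' : ((σ a : ℕ) : ℝ) ≤ (j : ℕ) := by exact_mod_cast hσa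
  have hb' : ((j : ℕ) : ℝ) < (b : ℕ) := by exact_mod_cast hb
  have hσb' : ((j : ℕ) : ℝ) < (σ b : ℕ) := by exact_mod_cast hσb
  generalize ((a : ℕ) : ℝ) = x at *
  generalize ((σ a : ℕ) : ℝ) = x' at *
  generalize ((b : ℕ) : ℝ) = y at *
  generalize ((σ b : ℕ) : ℝ) = y' at *
  generalize ((j : ℕ) : ℝ) = t at *
  rw [abs_of_pos (show 0 < y' - x by linarith), abs_of_neg (show x' - y < 0 by linarith)]
  have key : Real.exp (-β * (y' - x + -(x' - y) - |x' - x| - |y' - y|))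
      = Real.exp (-(2 * β) * (t - max x x')) * Real.exp (-(2 * β) * (min y y' - t)) := by
    rw [← Real.exp_add]
    congr 1
    rcases le_total x x' with h | h <;> rcases le_total y y' with h' | h' <;>
      simp only [h, h', max_eq_left, max_eq_right, min_eq_left, min_eq_right, abs_of_nonneg,
        abs_of_nonpos, sub_nonneg, sub_nonpos] <;> ring
  rw [key]
  refine mul_le_mul ?_ ?_ (Real.exp_pos _).le (by positivity)
  · rcases le_total x x' with h | h <;> simp [h, (Real.exp_pos _).le]
  · rcases le_total y y' with h | h <;> simp [h, (Real.exp_pos _).le]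

/-- Double counting for the uncrossing map `(σ, a, b) ↦ σ ∘ (a b)`, where `a → σ a` crosses the
cut after `j` upwards and `b → σ b` crosses it downwards. The predicate `P` selects admissible
pairs, and uncrossing an admissible pair leads from `A` into `B`. -/
lemma sum_uncross_le {n : ℕ} {β : ℝ} (hβ : 0 < β) (j : Fin n)
    (B : Equiv.Perm (Fin n) → Prop) (P : Equiv.Perm (Fin n) → Fin n → Fin n → Prop)
    (hP : ∀ σ a b, P σ a b → a ≤ j ∧ j < σ a ∧ j < b ∧ σ b ≤ j ∧ B (σ * Equiv.swap a b)) :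
    ∑ σ, ∑ a, ∑ b, (if P σ a b then mallowsWeight n β σ else 0)
      ≤ Real.exp (-(2 * β)) * scale β ^ 2 *
        ∑ σ, (if B σ then mallowsWeight n β σ else 0) := by
  have hre : ∑ σ, ∑ a, ∑ b, (if P σ a b then mallowsWeight n β σ else 0)
      = ∑ σ, ∑ a, ∑ b, (if P (σ * Equiv.swap a b) a b then
          mallowsWeight n β (σ * Equiv.swap a b) else 0) := by
    rw [Finset.sum_comm]
    conv_rhs => rw [Finset.sum_comm]
    refine Finset.sum_congr rfl fun a _ => ?_
    rw [Finset.sum_comm]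
    conv_rhs => rw [Finset.sum_comm]
    refine Finset.sum_congr rfl fun b _ => ?_
    exact (Equiv.sum_comp (Equiv.mulRight (Equiv.swap a b))
      (fun σ => if P σ a b then mallowsWeight n β σ else 0)).symm
  rw [hre, Finset.mul_sum]
  refine Finset.sum_le_sum fun σ _ => ?_
  by_cases hB : B σ
  · rw [if_pos hB]
    calc _ ≤ ∑ a, ∑ b, mallowsWeight n β σ * ((leftKer β j a + leftKer β j (σ a)) *
              (rightKer β j b + rightKer β j (σ b))) := by
            refine Finset.sum_le_sum fun a _ => Finset.sum_le_sum fun b _ => ?_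
            split_ifs with h
            · obtain ⟨h1, h2, h3, h4, -⟩ := hP _ _ _ h
              simp only [Equiv.Perm.mul_apply, Equiv.swap_apply_left,
                Equiv.swap_apply_right] at h2 h4
              exact mallowsWeight_cross_le β j σ a b h1 h4 h3 h2
            · have := mallowsWeight_pos n β σ
              have := leftKer_nonneg β j a
              have := leftKer_nonneg β j (σ a)
              have := rightKer_nonneg β j b
              have := rightKer_nonneg β j (σ b)
              positivity
      _ = mallowsWeight n β σ * ((∑ a, (leftKer β j a + leftKer β j (σ a))) *
              ∑ b, (rightKer β j b + rightKer β j (σ b))) := by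
            rw [Finset.sum_mul_sum, Finset.mul_sum]
            simp only [Finset.mul_sum]
      _ ≤ mallowsWeight n β σ * (scale β * (Real.exp (-(2 * β)) * scale β)) := by
            refine mul_le_mul_of_nonneg_left ?_ (mallowsWeight_pos n β σ).le
            refine mul_le_mul (sum_leftKer_add_le hβ j σ) (sum_rightKer_add_le hβ j σ) ?_
              (by linarith [two_le_scale hβ])
            exact Finset.sum_nonneg fun b _ =>
              add_nonneg (rightKer_nonneg β j b) (rightKer_nonneg β j (σ b))
      _ = _ := by ring
  · rw [if_neg hB, mul_zero]
    refine le_of_eq (Finset.sum_eq_zero fun a _ => Finset.sum_eq_zero fun b _ => ?_)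
    rw [if_neg]
    intro h
    have := (hP _ _ _ h).2.2.2.2
    rw [mul_assoc, Equiv.swap_mul_self, mul_one] at this
    exact hB this

/-! ### Crossing numbers -/

/-- The number of arcs `i → σ i` crossing the cut between `j` and `j + 1` upwards. -/
def crossNum {n : ℕ} (j : Fin n) (σ : Equiv.Perm (Fin n)) : ℕ :=
  (Finset.univ.filter fun i => i ≤ j ∧ j < σ i).card

lemma card_le_split {n : ℕ} (j : Fin n) (σ : Equiv.Perm (Fin n)) :
    crossNum j σ + (Finset.univ.filter fun i => i ≤ j ∧ σ i ≤ j).card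
      = (Finset.univ.filter fun i : Fin n => i ≤ j).card := by
  unfold crossNum
  rw [← Finset.card_union_of_disjoint]
  · congr 1
    ext i
    simp only [Finset.mem_union, Finset.mem_filter, Finset.mem_univ, true_and]
    constructor
    · tauto
    · intro h
      rcases le_or_gt (σ i) j with h' | h' <;> tauto
  · rw [Finset.disjoint_left]
    intro i hi hi'
    simp only [Finset.mem_filter, Finset.mem_univ, true_and] at hi hi'
    exact absurd hi.2 (not_lt.mpr hi'.2)

lemma card_inv_stay {n : ℕ} (j : Fin n) (σ : Equiv.Perm (Fin n)) :
    (Finset.univ.filter fun i => i ≤ j ∧ σ⁻¹ i ≤ j).card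
      = (Finset.univ.filter fun i => i ≤ j ∧ σ i ≤ j).card := by
  symm
  refine Finset.card_bij (fun i _ => σ i) ?_ ?_ ?_
  · intro i hi
    simpa [and_comm] using hi
  · intro a _ b _ h
    exact σ.injective h
  · intro b hb
    exact ⟨σ⁻¹ b, by simpa [and_comm] using hb, by simp⟩

lemma crossNum_inv {n : ℕ} (j : Fin n) (σ : Equiv.Perm (Fin n)) :
    crossNum j σ⁻¹ = crossNum j σ := by
  have h1 := card_le_split j σ
  have h2 := card_le_split j σ⁻¹
  rw [card_inv_stay] at h2
  omega

lemma card_down {n : ℕ} (j : Fin n) (σ : Equiv.Perm (Fin n)) :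
    (Finset.univ.filter fun i => j < i ∧ σ i ≤ j).card = crossNum j σ := by
  rw [← crossNum_inv]
  unfold crossNum
  refine Finset.card_bij (fun i _ => σ i) ?_ ?_ ?_
  · intro i hi
    simpa [and_comm] using hi
  · intro a _ b _ h
    exact σ.injective h
  · intro b hb
    exact ⟨σ⁻¹ b, by simpa [and_comm] using hb, by simp⟩

lemma swap_le_iff {n : ℕ} {j a : Fin n} (ha : a ≤ j) (i : Fin n) :
    Equiv.swap j a i ≤ j ↔ i ≤ j := by
  rcases eq_or_ne i j with rfl | h
  · simp [ha]
  · rcases eq_or_ne i a with rfl | h'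
    · simp [ha]
    · rw [Equiv.swap_apply_of_ne_of_ne h h']

lemma crossNum_mul_swap {n : ℕ} {j a : Fin n} (ha : a ≤ j) (σ : Equiv.Perm (Fin n)) :
    crossNum j (σ * Equiv.swap j a) = crossNum j σ := by
  unfold crossNum
  refine Finset.card_bij (fun i _ => Equiv.swap j a i) ?_ ?_ ?_
  · intro i hi
    rw [Finset.mem_filter] at hi ⊢
    simpa [swap_le_iff ha] using hi
  · intro a _ b _ h
    exact (Equiv.injective _) h
  · intro b hb
    refine ⟨Equiv.swap j a b, ?_, by simp⟩
    rw [Finset.mem_filter] at hb ⊢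
    simpa [swap_le_iff ha] using hb

lemma crossNum_swap_mul {n : ℕ} {j c : Fin n} (hc : c ≤ j) (σ : Equiv.Perm (Fin n)) :
    crossNum j (Equiv.swap j c * σ) = crossNum j σ := by
  rw [← crossNum_inv, mul_inv_rev, Equiv.swap_inv, crossNum_mul_swap hc, crossNum_inv]

/-! ### Excursions of a cycle below a cut -/

/-- The cycle of `s` reaches the points `≤ j`. -/
def Reaches {n : ℕ} (s j : Fin n) (σ : Equiv.Perm (Fin n)) : Prop := ∃ k : ℕ, (σ ^ k) s ≤ j

/-- The smallest point of the cycle of `s` is `j`. -/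
def MinAt {n : ℕ} (s j : Fin n) (σ : Equiv.Perm (Fin n)) : Prop :=
  (∃ k : ℕ, (σ ^ k) s = j) ∧ ∀ k : ℕ, j ≤ (σ ^ k) s

/-- The first time the cycle started at `s > j` steps down to `≤ j`: the step starts at `σ^k s`,
and every point visited up to then is `> j`. -/
lemma Reaches.exists_first {n : ℕ} {s j : Fin n} {σ : Equiv.Perm (Fin n)} (hs : j < s)
    (h : Reaches s j σ) :
    ∃ k : ℕ, (∀ i ≤ k, j < (σ ^ i) s) ∧ (σ ^ (k + 1)) s ≤ j := by
  have hk := Nat.find_spec h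
  have hmin := fun m => Nat.find_min h (m := m)
  obtain ⟨k, hk'⟩ : ∃ k, Nat.find h = k + 1 := by
    refine Nat.exists_eq_succ_of_ne_zero fun h0 => ?_
    rw [h0] at hk
    simp only [pow_zero, Equiv.Perm.coe_one, id_eq] at hk
    exact absurd hk (not_le.mpr hs)
  refine ⟨k, fun i hi => not_le.mp (hmin i (by omega)), hk' ▸ hk⟩

lemma Reaches.inv {n : ℕ} {s j : Fin n} {σ : Equiv.Perm (Fin n)} (h : Reaches s j σ) :
    Reaches s j σ⁻¹ := by
  obtain ⟨k, hk⟩ := h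
  refine ⟨(orderOf σ - 1) * k, ?_⟩
  have : σ⁻¹ ^ (orderOf σ - 1) = σ := by
    have h1 : σ ^ (orderOf σ - 1) * σ = 1 := by
      rw [← pow_succ, Nat.sub_add_cancel (orderOf_pos σ), pow_orderOf_eq_one]
    rw [inv_pow, inv_eq_of_mul_eq_one_right h1]
  rwa [pow_mul, this]

/-- Among the arcs descending below the cut there is one, `b₀`, such that uncrossing any pair
avoiding `b₀` leaves the path from `s` to its first point `≤ j` intact. -/
lemma Reaches.exists_protected {n : ℕ} {s j : Fin n} {σ : Equiv.Perm (Fin n)} (hs : j < s)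
    (h : Reaches s j σ) :
    ∃ b₀ : Fin n, j < b₀ ∧ σ b₀ ≤ j ∧ ∀ a b, a ≤ j → σ b ≤ j → b ≠ b₀ →
      Reaches s j (σ * Equiv.swap a b) := by
  obtain ⟨k, hk, hk1⟩ := h.exists_first hs
  refine ⟨(σ ^ k) s, hk k le_rfl, by rwa [pow_succ', Equiv.Perm.mul_apply] at hk1, ?_⟩
  intro a b ha hb hbne
  have step : ∀ i ≤ k + 1, ((σ * Equiv.swap a b) ^ i) s = (σ ^ i) s := by
    intro i
    induction i with
    | zero => simp
    | succ i ih =>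
      intro hi
      have hgt := hk i (by omega)
      rw [pow_succ', Equiv.Perm.mul_apply, ih (by omega), Equiv.Perm.mul_apply,
        Equiv.swap_apply_of_ne_of_ne, pow_succ', Equiv.Perm.mul_apply]
      · rintro rfl
        exact absurd ha (not_le.mpr hgt)
      · rintro rfl
        rcases eq_or_lt_of_le (show i ≤ k by omega) with rfl | hlt
        · exact hbne rfl
        · have := hk (i + 1) (by omega)
          rw [pow_succ', Equiv.Perm.mul_apply] at this
          exact absurd hb (not_le.mpr this)
  exact ⟨k + 1, by rw [step _ le_rfl]; exact hk1⟩

/-- Let `c` be the first point `≤ j` of the cycle after `s`, and `a` the last one before the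
return to `s`. Replacing the excursion between `c` and `a` by the single point `j` makes `j` the
minimum of the cycle of `s`. -/
lemma Reaches.exists_close {n : ℕ} {s j : Fin n} {σ : Equiv.Perm (Fin n)} (hs : j < s)
    (h : Reaches s j σ) :
    ∃ a c : Fin n, a ≤ j ∧ j < σ a ∧ c ≤ j ∧ j < σ⁻¹ c ∧
      MinAt s j (Equiv.swap j c * σ * Equiv.swap j a) := by
  obtain ⟨k, hk, hk1⟩ := h.exists_first hs
  obtain ⟨l, hl, hl1⟩ := h.inv.exists_first hs
  have hsucc : ∀ i, σ ((σ⁻¹ ^ (i + 1)) s) = (σ⁻¹ ^ i) s := by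
    intro i; simp [pow_succ', Equiv.Perm.mul_apply]
  have hc : σ⁻¹ ((σ ^ (k + 1)) s) = (σ ^ k) s := by
    simp [pow_succ', Equiv.Perm.mul_apply]
  refine ⟨(σ⁻¹ ^ (l + 1)) s, (σ ^ (k + 1)) s, hl1, ?_, hk1, ?_, ?_⟩
  · rw [hsucc]; exact hl l le_rfl
  · rw [hc]; exact hk k le_rfl
  set a := (σ⁻¹ ^ (l + 1)) s with ha
  set c := (σ ^ (k + 1)) s with hcdef
  set τ := Equiv.swap j c * σ * Equiv.swap j a with hτ
  have hfix : ∀ x, j < x → j < σ x → τ x = σ x := by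
    intro x hx hσx
    rw [hτ, Equiv.Perm.mul_apply, Equiv.Perm.mul_apply,
      Equiv.swap_apply_of_ne_of_ne hx.ne' (hl1.trans_lt hx).ne',
      Equiv.swap_apply_of_ne_of_ne hσx.ne' (hk1.trans_lt hσx).ne']
  have hlast : τ ((σ ^ k) s) = j := by
    have hx := hk k le_rfl
    rw [hτ, Equiv.Perm.mul_apply, Equiv.Perm.mul_apply,
      Equiv.swap_apply_of_ne_of_ne hx.ne' (hl1.trans_lt hx).ne', ← Equiv.Perm.mul_apply σ,
      ← pow_succ', ← hcdef, Equiv.swap_apply_right]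
  have hj : τ j = (σ⁻¹ ^ l) s := by
    have hx := hl l le_rfl
    rw [hτ, Equiv.Perm.mul_apply, Equiv.Perm.mul_apply, Equiv.swap_apply_left, ha, hsucc,
      Equiv.swap_apply_of_ne_of_ne hx.ne' (hk1.trans_lt hx).ne']
  have hfwd : ∀ i ≤ k, (τ ^ i) s = (σ ^ i) s := by
    intro i
    induction i with
    | zero => simp
    | succ i ih =>
      intro hi
      have h2 := hk (i + 1) hi
      rw [pow_succ', Equiv.Perm.mul_apply] at h2
      rw [pow_succ', Equiv.Perm.mul_apply, ih (by omega), hfix _ (hk i (by omega)) h2,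
        pow_succ', Equiv.Perm.mul_apply]
  refine ⟨⟨k + 1, by rw [pow_succ', Equiv.Perm.mul_apply, hfwd k le_rfl, hlast]⟩, ?_⟩
  -- The points `j`, `σ^i s` (`i ≤ k`) and `σ^{-i} s` (`i ≤ l`) form a `τ`-invariant set.
  have hinv : ∀ m : ℕ, (τ ^ m) s = j ∨ (∃ i ≤ k, (τ ^ m) s = (σ ^ i) s) ∨
      (∃ i ≤ l, (τ ^ m) s = (σ⁻¹ ^ i) s) := by
    have fstep : ∀ i ≤ k, τ ((σ ^ i) s) = j ∨ (∃ i' ≤ k, τ ((σ ^ i) s) = (σ ^ i') s) := by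
      intro i hi
      rcases eq_or_lt_of_le hi with rfl | hlt
      · exact Or.inl hlast
      · refine Or.inr ⟨i + 1, hlt, ?_⟩
        have h2 := hk (i + 1) hlt
        rw [pow_succ', Equiv.Perm.mul_apply] at h2
        rw [hfix _ (hk i hi) h2, pow_succ', Equiv.Perm.mul_apply]
    intro m
    induction m with
    | zero => exact Or.inr (Or.inl ⟨0, by omega, by simp⟩)
    | succ m ih =>
      rw [pow_succ', Equiv.Perm.mul_apply]
      rcases ih with ih | ⟨i, hi, ih⟩ | ⟨i, hi, ih⟩
      · rw [ih, hj]
        exact Or.inr (Or.inr ⟨l, le_rfl, rfl⟩)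
      · rw [ih]
        rcases fstep i hi with h | h
        · exact Or.inl h
        · exact Or.inr (Or.inl h)
      · rw [ih]
        cases i with
        | zero =>
          rcases fstep 0 (by omega) with h | h
          · exact Or.inl h
          · exact Or.inr (Or.inl h)
        | succ i =>
          refine Or.inr (Or.inr ⟨i, by omega, ?_⟩)
          rw [hfix _ (hl _ hi) (by rw [hsucc]; exact hl i (by omega)), hsucc]
  intro m
  rcases hinv m with h | ⟨i, hi, h⟩ | ⟨i, hi, h⟩
  · exact h.ge
  · rw [h]; exact (hk i hi).le
  · rw [h]; exact (hl i hi).le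

/-! ### Consequences of uncrossing -/

lemma sum_if_pairs {n : ℕ} (p r : Fin n → Prop) [DecidablePred p] [DecidablePred r]
    [hd : ∀ a b, Decidable (p a ∧ r b)] (x : ℝ) :
    ∑ a, ∑ b, (if p a ∧ r b then x else 0)
      = ((Finset.univ.filter p).card : ℝ) * (Finset.univ.filter r).card * x := by
  have : ∀ a b, (if p a ∧ r b then x else 0)
      = (if p a then (1 : ℝ) else 0) * ((if r b then (1 : ℝ) else 0) * x) := by
    intro a b
    by_cases h1 : p a <;> by_cases h2 : r b <;> simp [h1, h2]
  simp only [this, ← Finset.mul_sum, ← Finset.sum_mul, Finset.sum_boole]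
  ring

/-- Second moment bound for the crossing number on the event that the cycle of `s` passes
below the cut. -/
lemma sum_crossNum_sq_le {n : ℕ} {β : ℝ} (hβ : 0 < β) {s j : Fin n} (hs : j < s) :
    ∑ σ, (if Reaches s j σ then ((crossNum j σ : ℝ) - 1) ^ 2 * mallowsWeight n β σ else 0)
      ≤ scale β ^ 2 * ∑ σ, (if Reaches s j σ then mallowsWeight n β σ else 0) := by
  have hch : ∀ σ : Equiv.Perm (Fin n), ∃ b₀ : Fin n, Reaches s j σ →
      j < b₀ ∧ σ b₀ ≤ j ∧ ∀ a b, a ≤ j → σ b ≤ j → b ≠ b₀ →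
      Reaches s j (σ * Equiv.swap a b) := by
    intro σ
    by_cases h : Reaches s j σ
    · obtain ⟨b, hb⟩ := h.exists_protected hs
      exact ⟨b, fun _ => hb⟩
    · exact ⟨s, fun h' => absurd h' h⟩
  choose b₀ hb₀ using hch
  have key := sum_uncross_le hβ j (Reaches s j)
    (fun σ a b => Reaches s j σ ∧ (a ≤ j ∧ j < σ a) ∧ (j < b ∧ σ b ≤ j) ∧ b ≠ b₀ σ)
    (by
      rintro σ a b ⟨h, ⟨h1, h2⟩, ⟨h3, h4⟩, h5⟩
      exact ⟨h1, h2, h3, h4, (hb₀ σ h).2.2 a b h1 h4 h5⟩)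
  have hS : 0 ≤ ∑ σ, (if Reaches s j σ then mallowsWeight n β σ else 0) :=
    Finset.sum_nonneg fun σ _ => by
      split_ifs
      · exact (mallowsWeight_pos n β σ).le
      · exact le_rfl
  refine le_trans (Finset.sum_le_sum fun σ _ => ?_) (key.trans ?_)
  · by_cases h : Reaches s j σ
    · simp only [h, true_and, if_true]
      rw [sum_if_pairs (hd := _) (fun a => a ≤ j ∧ j < σ a) (fun b => (j < b ∧ σ b ≤ j) ∧ b ≠ b₀ σ)]
      have hcard : (Finset.univ.filter fun b => (j < b ∧ σ b ≤ j) ∧ b ≠ b₀ σ).card + 1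
          = crossNum j σ := by
        rw [← card_down, ← Finset.filter_filter, Finset.filter_ne', Finset.card_erase_add_one]
        obtain ⟨h1, h2, -⟩ := hb₀ σ h
        simp [h1, h2]
      have hc' : ((Finset.univ.filter fun b => (j < b ∧ σ b ≤ j) ∧ b ≠ b₀ σ).card : ℝ)
          = crossNum j σ - 1 := by
        rw [← hcard]; push_cast; ring
      rw [hc']
      refine mul_le_mul_of_nonneg_right ?_ (mallowsWeight_pos n β σ).le
      have h1 : (1 : ℝ) ≤ crossNum j σ := by
        exact_mod_cast (show 1 ≤ crossNum j σ by omega)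
      change _ ≤ (crossNum j σ : ℝ) * _
      nlinarith
    · simp [h]
  · have h1 := exp_lt_one_of_pos hβ
    refine mul_le_mul_of_nonneg_right ?_ hS
    nlinarith [sq_nonneg (scale β)]

/-- A cycle of `s > j` passing below the cut forces a pair of opposite arcs, so the event costs
at least one factor `q`. -/
lemma sum_reaches_le {n : ℕ} {β : ℝ} (hβ : 0 < β) {s j : Fin n} (hs : j < s) :
    ∑ σ, (if Reaches s j σ then mallowsWeight n β σ else 0)
      ≤ Real.exp (-(2 * β)) * scale β ^ 2 * ∑ σ, mallowsWeight n β σ := by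
  have key := sum_uncross_le hβ j (fun _ => True)
    (fun σ a b => (a ≤ j ∧ j < σ a) ∧ (j < b ∧ σ b ≤ j))
    (by
      rintro σ a b ⟨⟨h1, h2⟩, ⟨h3, h4⟩⟩
      exact ⟨h1, h2, h3, h4, trivial⟩)
  simp only [if_true] at key
  refine le_trans (Finset.sum_le_sum fun σ _ => ?_) key
  refine le_of_le_of_eq ?_
    (sum_if_pairs (hd := _) (fun a => a ≤ j ∧ j < σ a) (fun b => j < b ∧ σ b ≤ j) _).symm
  rw [card_down]
  change _ ≤ (crossNum j σ : ℝ) * _ * _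
  have hw := mallowsWeight_pos n β σ
  split_ifs with h
  · obtain ⟨a, c, ha, hσa, -⟩ := h.exists_close hs
    have h1 : (1 : ℝ) ≤ crossNum j σ := by
      have : 0 < crossNum j σ := Finset.card_pos.mpr ⟨a, by simp [ha, hσa]⟩
      exact_mod_cast this
    have : (1 : ℝ) ≤ crossNum j σ * crossNum j σ := by nlinarith
    nlinarith
  · positivity

/-! ### Closing the cycle at a prescribed minimum -/

/-- Multiplicity kernel for the closing map: `1` for arcs crossing the cut upwards, and geometric
in the distance to `j` for arcs inside `[0, j]`. -/
def closeKer {n : ℕ} (β : ℝ) (j : Fin n) (σ : Equiv.Perm (Fin n)) (a : Fin n) : ℝ :=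
  (if a ≤ j ∧ j < σ a then 1 else 0) + (leftKer β j a + leftKer β j (σ a))

lemma closeKer_nonneg {n : ℕ} (β : ℝ) (j : Fin n) (σ : Equiv.Perm (Fin n)) (a : Fin n) :
    0 ≤ closeKer β j σ a := by
  have := leftKer_nonneg β j a
  have := leftKer_nonneg β j (σ a)
  unfold closeKer; positivity

lemma sum_closeKer_le {n : ℕ} {β : ℝ} (hβ : 0 < β) (j : Fin n) (σ : Equiv.Perm (Fin n)) :
    ∑ a, closeKer β j σ a ≤ crossNum j σ + scale β := by
  unfold closeKer
  rw [Finset.sum_add_distrib, Finset.sum_boole]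
  exact add_le_add le_rfl (sum_leftKer_add_le hβ j σ)

/-- If `τ j > j`, exchanging the images of `j` and `a ≤ j` preserves the weight when `τ a > j`,
and multiplies it by `q ^ (j - max a (τ a))` otherwise. -/
lemma mallowsWeight_close_le {n : ℕ} (β : ℝ) (j : Fin n)
    (τ : Equiv.Perm (Fin n)) (a : Fin n) (ha : a ≤ j) (hτ : j < τ j) :
    mallowsWeight n β (τ * Equiv.swap j a) ≤ mallowsWeight n β τ * closeKer β j τ a := by
  have hw := mallowsWeight_pos n β τ
  rcases eq_or_ne j a with rfl | hne
  · simp only [Equiv.swap_self]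
    have : 1 ≤ closeKer β j τ j := by
      have h1 : leftKer β j j = 1 := by simp [leftKer]
      have h2 := leftKer_nonneg β j (τ j)
      unfold closeKer
      rw [h1]
      split_ifs <;> linarith
    have h2 : τ * Equiv.refl (Fin n) = τ := mul_one τ
    rw [h2]
    nlinarith
  rw [mallowsWeight_mul_swap n β τ j a hne]
  refine mul_le_mul_of_nonneg_left ?_ hw.le
  have ha' : ((a : ℕ) : ℝ) ≤ (j : ℕ) := by exact_mod_cast ha
  have hτ' : ((j : ℕ) : ℝ) < (τ j : ℕ) := by exact_mod_cast hτ
  have hn1 := leftKer_nonneg β j a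
  have hn2 := leftKer_nonneg β j (τ a)
  unfold closeKer
  rcases lt_or_ge j (τ a) with h | h
  · rw [if_pos ⟨ha, h⟩]
    have h' : ((j : ℕ) : ℝ) < (τ a : ℕ) := by exact_mod_cast h
    rw [abs_of_pos (by linarith), abs_of_pos (by linarith), abs_of_pos (by linarith),
      abs_of_pos (by linarith)]
    ring_nf
    rw [Real.exp_zero]
    linarith
  · rw [if_neg (fun h2 => absurd h2.2 (not_lt.mpr h)), zero_add]
    have h' : ((τ a : ℕ) : ℝ) ≤ (j : ℕ) := by exact_mod_cast h
    simp only [leftKer, ha, h, if_true]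
    generalize ((a : ℕ) : ℝ) = x at *
    generalize ((τ a : ℕ) : ℝ) = x' at *
    generalize ((τ j : ℕ) : ℝ) = y at *
    generalize ((j : ℕ) : ℝ) = t at *
    have key : Real.exp (-β * (|x' - t| + |y - x| - |y - t| - |x' - x|))
        = Real.exp (-(2 * β) * (t - max x x')) := by
      rw [abs_of_nonpos (by linarith : x' - t ≤ 0), abs_of_pos (by linarith : 0 < y - x),
        abs_of_pos (by linarith : 0 < y - t)]
      congr 1
      rcases le_total x x' with h | h <;>
        simp only [h, max_eq_left, max_eq_right, abs_of_nonneg,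
          abs_of_nonpos, sub_nonneg, sub_nonpos] <;> ring
    rw [key]
    rcases le_total x x' with h | h <;> simp [h, (Real.exp_pos _).le]

/-- Double counting for the closing map `σ ↦ (j c) ∘ σ ∘ (j a)`. The normalization by
`(crossNum + scale)²` absorbs the multiplicity, since the closing map preserves `crossNum`. -/
lemma sum_close_le {n : ℕ} {β : ℝ} (hβ : 0 < β) {s j : Fin n} (hs : j < s) :
    ∑ σ, (if Reaches s j σ then mallowsWeight n β σ / (crossNum j σ + scale β) ^ 2 else 0)
      ≤ ∑ σ, (if MinAt s j σ then mallowsWeight n β σ else 0) := by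
  have hL := two_le_scale hβ
  have hden : ∀ σ : Equiv.Perm (Fin n), 0 < (crossNum j σ : ℝ) + scale β := fun σ => by positivity
  have hch : ∀ σ : Equiv.Perm (Fin n), ∃ a c : Fin n, Reaches s j σ →
      a ≤ j ∧ j < σ a ∧ c ≤ j ∧ j < σ⁻¹ c ∧
      MinAt s j (Equiv.swap j c * σ * Equiv.swap j a) := by
    intro σ
    by_cases h : Reaches s j σ
    · obtain ⟨a, c, hac⟩ := h.exists_close hs
      exact ⟨a, c, fun _ => hac⟩
    · exact ⟨s, s, fun h' => absurd h' h⟩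
  choose a₀ c₀ h₀ using hch
  set F : Equiv.Perm (Fin n) → Fin n → Fin n → ℝ := fun σ a c =>
    if Reaches s j σ ∧ a = a₀ σ ∧ c = c₀ σ then
      mallowsWeight n β σ / (crossNum j σ + scale β) ^ 2 else 0 with hF
  have hexp : ∑ σ, (if Reaches s j σ then
        mallowsWeight n β σ / (crossNum j σ + scale β) ^ 2 else 0)
      = ∑ σ, ∑ a, ∑ c, F σ a c := by
    refine Finset.sum_congr rfl fun σ _ => ?_
    rw [Finset.sum_eq_single (a₀ σ), Finset.sum_eq_single (c₀ σ)]
    · simp [hF]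
    · intro c _ hc; simp [hF, hc]
    · simp
    · intro a _ ha; simp [hF, ha]
    · simp
  have hre : ∑ σ, ∑ a, ∑ c, F σ a c
      = ∑ τ, ∑ a, ∑ c, F (Equiv.swap j c * (τ * Equiv.swap j a)) a c := by
    rw [Finset.sum_comm]
    conv_rhs => rw [Finset.sum_comm]
    refine Finset.sum_congr rfl fun a _ => ?_
    rw [Finset.sum_comm]
    conv_rhs => rw [Finset.sum_comm]
    refine Finset.sum_congr rfl fun c _ => ?_
    rw [← Equiv.sum_comp (Equiv.mulLeft (Equiv.swap j c)) (fun σ => F σ a c),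
      ← Equiv.sum_comp (Equiv.mulRight (Equiv.swap j a))]
    rfl
  rw [hexp, hre]
  refine Finset.sum_le_sum fun τ _ => ?_
  have hback : ∀ a c : Fin n, Equiv.swap j c * (Equiv.swap j c * (τ * Equiv.swap j a)) *
      Equiv.swap j a = τ := by
    intro a c
    rw [← mul_assoc (Equiv.swap j c), Equiv.swap_mul_self, one_mul, mul_assoc,
      Equiv.swap_mul_self, mul_one]
  by_cases hτ : MinAt s j τ
  · rw [if_pos hτ]
    have hbound : ∀ a c, F (Equiv.swap j c * (τ * Equiv.swap j a)) a c
        ≤ mallowsWeight n β τ / (crossNum j τ + scale β) ^ 2 *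
          (closeKer β j τ a * (if a ≤ j then closeKer β j (τ * Equiv.swap j a)⁻¹ c else 0)) := by
      intro a c
      have hw := mallowsWeight_pos n β τ
      have hk1 := closeKer_nonneg β j τ a
      have hk2 := closeKer_nonneg β j (τ * Equiv.swap j a)⁻¹ c
      simp only [hF]
      split_ifs with h1 h2 h2
      · obtain ⟨hr, ha, hc⟩ := h1
        obtain ⟨g1, g2, g3, g4, -⟩ := h₀ _ hr
        rw [← ha] at g1 g2
        rw [← hc] at g3 g4
        rw [crossNum_swap_mul g3, crossNum_mul_swap g1, div_mul_eq_mul_div]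
        refine div_le_div_of_nonneg_right ?_ (by positivity)
        have hρ1 : j < τ j := by
          simp only [Equiv.Perm.mul_apply, Equiv.swap_apply_right] at g2
          by_contra hcon
          exact absurd ((swap_le_iff g3 (τ j)).mpr (not_lt.mp hcon)) (not_le.mpr g2)
        have hρ2 : j < (τ * Equiv.swap j a)⁻¹ j := by
          rw [mul_inv_rev, Equiv.swap_inv, Equiv.Perm.mul_apply, Equiv.swap_apply_right] at g4
          exact g4
        have e : Equiv.swap j c * (τ * Equiv.swap j a)
            = ((τ * Equiv.swap j a)⁻¹ * Equiv.swap j c)⁻¹ := by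
          rw [mul_inv_rev, Equiv.swap_inv, inv_inv]
        rw [e, mallowsWeight_inv]
        have b1 := mallowsWeight_close_le β j (τ * Equiv.swap j a)⁻¹ c g3 hρ2
        rw [mallowsWeight_inv] at b1
        have b2 := mallowsWeight_close_le β j τ a g1 hρ1
        calc _ ≤ _ := b1
          _ ≤ _ := mul_le_mul_of_nonneg_right b2 hk2
          _ = _ := by ring
      · exact absurd ((h₀ _ h1.1).1) (by rw [← h1.2.1]; exact h2)
      · positivity
      · simp
    calc _ ≤ ∑ a, ∑ c, mallowsWeight n β τ / (crossNum j τ + scale β) ^ 2 *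
          (closeKer β j τ a * (if a ≤ j then closeKer β j (τ * Equiv.swap j a)⁻¹ c else 0)) :=
          Finset.sum_le_sum fun a _ => Finset.sum_le_sum fun c _ => hbound a c
      _ ≤ ∑ a, mallowsWeight n β τ / (crossNum j τ + scale β) ^ 2 *
          (closeKer β j τ a * (crossNum j τ + scale β)) := by
          refine Finset.sum_le_sum fun a _ => ?_
          rw [← Finset.mul_sum, ← Finset.mul_sum]
          have hw := mallowsWeight_pos n β τ
          refine mul_le_mul_of_nonneg_left (mul_le_mul_of_nonneg_left ?_
            (closeKer_nonneg β j τ a)) (by positivity)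
          split_ifs with ha
          · refine (sum_closeKer_le hβ j _).trans (le_of_eq ?_)
            rw [crossNum_inv, crossNum_mul_swap ha]
          · simpa using (hden τ).le
      _ = mallowsWeight n β τ / (crossNum j τ + scale β) ^ 2 *
          ((∑ a, closeKer β j τ a) * (crossNum j τ + scale β)) := by
          rw [← Finset.mul_sum, ← Finset.sum_mul]
      _ ≤ mallowsWeight n β τ / (crossNum j τ + scale β) ^ 2 *
          ((crossNum j τ + scale β) * (crossNum j τ + scale β)) := by
          have hw := mallowsWeight_pos n β τ
          refine mul_le_mul_of_nonneg_left (mul_le_mul_of_nonneg_right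
            (sum_closeKer_le hβ j τ) (hden τ).le) (by positivity)
      _ = mallowsWeight n β τ := by
          have := (hden τ).ne'
          field_simp
  · rw [if_neg hτ]
    refine le_of_eq (Finset.sum_eq_zero fun a _ => Finset.sum_eq_zero fun c _ => ?_)
    simp only [hF]
    rw [if_neg]
    rintro ⟨hr, ha, hc⟩
    have := (h₀ _ hr).2.2.2.2
    rw [← ha, ← hc, hback] at this
    exact hτ this

/-! ### The hazard bound and the conclusion -/

/-- Hazard bound: given that the minimum of the cycle of `s` is at most `j < s`, it equals `j`
with probability at least `1 / (22 scale²)`. -/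
lemma hazard {n : ℕ} {β : ℝ} (hβ : 0 < β) {s j : Fin n} (hs : j < s) :
    ∑ σ, (if Reaches s j σ then mallowsWeight n β σ else 0)
      ≤ 22 * scale β ^ 2 * ∑ σ, (if MinAt s j σ then mallowsWeight n β σ else 0) := by
  have hL := two_le_scale hβ
  have h1 := sum_crossNum_sq_le hβ hs
  have h2 := sum_close_le hβ hs
  set SA := ∑ σ, (if Reaches s j σ then mallowsWeight n β σ else 0) with hSA
  set SM := ∑ σ, (if MinAt s j σ then mallowsWeight n β σ else 0) with hSM
  have hM : 0 ≤ SM := Finset.sum_nonneg fun σ _ => by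
    split_ifs
    · exact (mallowsWeight_pos n β σ).le
    · exact le_rfl
  have hpt : SA ≤ (1 / 4) / scale β ^ 2 * ∑ σ, (if Reaches s j σ then
        ((crossNum j σ : ℝ) - 1) ^ 2 * mallowsWeight n β σ else 0)
      + 16 * scale β ^ 2 * ∑ σ, (if Reaches s j σ then
        mallowsWeight n β σ / (crossNum j σ + scale β) ^ 2 else 0) := by
    rw [Finset.mul_sum, Finset.mul_sum, ← Finset.sum_add_distrib]
    refine Finset.sum_le_sum fun σ _ => ?_
    split_ifs with h
    · have hw := mallowsWeight_pos n β σ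
      have hd : (0 : ℝ) ≤ crossNum j σ := Nat.cast_nonneg _
      generalize (crossNum j σ : ℝ) = d at *
      generalize scale β = L at *
      -- Either the crossing number is of order `L`, or it is paid for by the second moment.
      have : 1 ≤ (1 / 4) / L ^ 2 * (d - 1) ^ 2 + 16 * L ^ 2 / (d + L) ^ 2 := by
        rcases le_or_gt (d - 1) (2 * L) with hle | hgt
        · have : 1 ≤ 16 * L ^ 2 / (d + L) ^ 2 := by
            rw [one_le_div (by positivity)]
            nlinarith
          have : 0 ≤ (1 / 4) / L ^ 2 * (d - 1) ^ 2 := by positivity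
          linarith
        · have : 1 ≤ (1 / 4) / L ^ 2 * (d - 1) ^ 2 := by
            rw [div_mul_eq_mul_div, one_le_div (by positivity)]
            nlinarith
          have : 0 ≤ 16 * L ^ 2 / (d + L) ^ 2 := by positivity
          linarith
      calc mallowsWeight n β σ = 1 * mallowsWeight n β σ := (one_mul _).symm
        _ ≤ _ := mul_le_mul_of_nonneg_right this hw.le
        _ = _ := by ring
    · simp
  have hL2 : 0 < scale β ^ 2 := by positivity
  have e1 := mul_le_mul_of_nonneg_left h1 (show 0 ≤ (1 / 4) / scale β ^ 2 by positivity)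
  have e2 := mul_le_mul_of_nonneg_left h2 (show 0 ≤ 16 * scale β ^ 2 by positivity)
  have e3 : (1 / 4) / scale β ^ 2 * (scale β ^ 2 * SA) = SA / 4 := by field_simp
  rw [e3] at e1
  nlinarith [mul_nonneg hL2.le hM]

/-- The smallest point of the cycle of `s`. -/
def cycMin {n : ℕ} (s : Fin n) (σ : Equiv.Perm (Fin n)) : Fin n :=
  (cycleFinset n σ s).min' (cycleFinset_nonempty n σ s)

lemma cycMin_mem {n : ℕ} (s : Fin n) (σ : Equiv.Perm (Fin n)) :
    ∃ k : ℕ, (σ ^ k) s = cycMin s σ :=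
  (Finset.mem_filter.mp ((cycleFinset n σ s).min'_mem (cycleFinset_nonempty n σ s))).2

lemma cycMin_le {n : ℕ} (s : Fin n) (σ : Equiv.Perm (Fin n)) (k : ℕ) :
    cycMin s σ ≤ (σ ^ k) s :=
  Finset.min'_le _ _ (Finset.mem_filter.mpr ⟨Finset.mem_univ _, k, rfl⟩)

lemma reaches_iff {n : ℕ} (s j : Fin n) (σ : Equiv.Perm (Fin n)) :
    Reaches s j σ ↔ cycMin s σ ≤ j := by
  constructor
  · rintro ⟨k, hk⟩
    exact (cycMin_le s σ k).trans hk
  · intro h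
    obtain ⟨k, hk⟩ := cycMin_mem s σ
    exact ⟨k, hk ▸ h⟩

lemma minAt_iff {n : ℕ} (s j : Fin n) (σ : Equiv.Perm (Fin n)) :
    MinAt s j σ ↔ cycMin s σ = j := by
  constructor
  · rintro ⟨⟨k, hk⟩, h⟩
    obtain ⟨m, hm⟩ := cycMin_mem s σ
    exact le_antisymm (hk ▸ cycMin_le s σ k) (hm ▸ h m)
  · rintro rfl
    exact ⟨cycMin_mem s σ, cycMin_le s σ⟩

lemma cycMin_le_self {n : ℕ} (s : Fin n) (σ : Equiv.Perm (Fin n)) : cycMin s σ ≤ s := by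
  simpa using cycMin_le s σ 0

lemma sub_cycMin_eq {n : ℕ} (s : Fin n) (σ : Equiv.Perm (Fin n)) :
    ((s : ℕ) : ℝ) - (cycMin s σ : ℕ)
      = ∑ j ∈ Finset.univ.filter (fun j => j < s), (if Reaches s j σ then (1 : ℝ) else 0) := by
  simp only [reaches_iff]
  rw [Finset.sum_boole, Finset.filter_filter]
  have : (Finset.univ.filter fun j => j < s ∧ cycMin s σ ≤ j) = Finset.Ico (cycMin s σ) s := by
    ext j; simp [and_comm]
  rw [this, Fin.card_Ico, Nat.cast_sub (cycMin_le_self s σ)]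

/-- Summing the hazard bound over all cuts `j < s`. -/
lemma sum_sub_cycMin_le {n : ℕ} {β : ℝ} (hβ : 0 < β) (s : Fin n) :
    ∑ σ, (((s : ℕ) : ℝ) - (cycMin s σ : ℕ)) * mallowsWeight n β σ
      ≤ 22 * scale β ^ 2 *
        ∑ σ, (if cycMin s σ < s then mallowsWeight n β σ else 0) := by
  calc _ = ∑ j ∈ Finset.univ.filter (fun j => j < s),
        ∑ σ, (if Reaches s j σ then mallowsWeight n β σ else 0) := by
        rw [Finset.sum_comm]
        refine Finset.sum_congr rfl fun σ _ => ?_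
        rw [sub_cycMin_eq, Finset.sum_mul]
        simp only [ite_mul, one_mul, zero_mul]
    _ ≤ ∑ j ∈ Finset.univ.filter (fun j => j < s),
        22 * scale β ^ 2 * ∑ σ, (if MinAt s j σ then mallowsWeight n β σ else 0) :=
        Finset.sum_le_sum fun j hj => hazard hβ (Finset.mem_filter.mp hj).2
    _ = _ := by
        rw [← Finset.mul_sum, Finset.sum_comm]
        congr 1
        refine Finset.sum_congr rfl fun σ _ => ?_
        simp only [minAt_iff]
        rw [Finset.sum_ite_eq]
        simp

lemma sum_cycMin_lt_le {n : ℕ} {β : ℝ} (hβ : 0 < β) (s : Fin n) :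
    ∑ σ, (if cycMin s σ < s then mallowsWeight n β σ else 0)
      ≤ Real.exp (-(2 * β)) * scale β ^ 2 * ∑ σ, mallowsWeight n β σ := by
  rcases Nat.eq_zero_or_pos (s : ℕ) with h0 | hpos
  · have hz : ∀ σ, ¬ cycMin s σ < s := fun σ h => by
      have : (cycMin s σ : ℕ) < s := h
      omega
    simp only [hz, if_false, Finset.sum_const_zero]
    have := Finset.sum_nonneg fun σ (_ : σ ∈ Finset.univ) => (mallowsWeight_pos n β σ).le
    positivity
  · -- `cycMin s σ < s` says that the cycle of `s` reaches below the cut just before `s`.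
    have hj : ((s : ℕ) - 1) < n := by omega
    have hlt : (⟨(s : ℕ) - 1, hj⟩ : Fin n) < s := by
      rw [Fin.lt_def]; simp only; omega
    refine le_trans (le_of_eq ?_) (sum_reaches_le hβ hlt)
    refine Finset.sum_congr rfl fun σ _ => ?_
    have : cycMin s σ < s ↔ Reaches s ⟨(s : ℕ) - 1, hj⟩ σ := by
      rw [reaches_iff, Fin.lt_def, Fin.le_def]; simp only; omega
    simp only [this]

lemma scale_le_of_le_one {β : ℝ} (hβ : 0 < β) (h1 : β ≤ 1) : scale β ≤ 3 / β := by
  have h : 1 + 2 * β ≤ Real.exp (2 * β) := by linarith [Real.add_one_le_exp (2 * β)]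
  have hq : Real.exp (-(2 * β)) ≤ (1 + 2 * β)⁻¹ := by
    rw [Real.exp_neg]
    exact inv_anti₀ (by positivity) h
  have hlow : 2 * β / 3 ≤ 1 - Real.exp (-(2 * β)) := by
    have : (1 + 2 * β)⁻¹ ≤ 1 - 2 * β / 3 := by
      rw [inv_le_iff_one_le_mul₀ (by positivity)]
      nlinarith
    linarith
  unfold scale
  have := inv_anti₀ (by positivity) hlow
  calc _ ≤ 2 * (2 * β / 3)⁻¹ := by linarith
    _ = 3 / β := by field_simp

lemma scale_le_of_one_le {β : ℝ} (h1 : 1 ≤ β) : scale β ≤ 3 := by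
  have h := scale_le_of_le_one one_pos le_rfl
  refine le_trans ?_ (h.trans (by norm_num))
  unfold scale
  have h2 := exp_lt_one_of_pos one_pos
  have h3 : Real.exp (-(2 * β)) ≤ Real.exp (-(2 * 1)) := Real.exp_le_exp.mpr (by linarith)
  have := inv_anti₀ (by linarith) (show 1 - Real.exp (-(2 * 1)) ≤ 1 - Real.exp (-(2 * β)) by
    linarith)
  linarith

end

/-- There is an absolute constant `C > 0` such that for all `n ≥ 1`, `β > 0`, `s ∈ [n]`:
`E[s - min C_s(σ)] ≤ C · min{e^{-2β} max{β⁻², 1}, s - 1}`. -/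
theorem statement18 :
    ∃ C : ℝ, 0 < C ∧
      ∀ n : ℕ, 0 < n → ∀ β : ℝ, 0 < β → ∀ s : Fin n,
        mallowsE n β (fun σ =>
            ((s : ℕ) : ℝ)
              - (((cycleFinset n σ s).min' (cycleFinset_nonempty n σ s) : ℕ) : ℝ))
          ≤ C * min (Real.exp (-(2 * β)) * max (β ^ 2)⁻¹ 1) ((s : ℕ) : ℝ) := by
  -- `1782 = 22 * 3² * 9`, where the last `9` bounds `e²` for `β ≤ 1` and `L²` for `β ≥ 1`.
  refine ⟨1782, by norm_num, fun n _ β hβ s => ?_⟩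
  set Z := ∑ τ : Equiv.Perm (Fin n), mallowsWeight n β τ with hZ
  have hZpos : 0 < Z := Finset.sum_pos (fun σ _ => mallowsWeight_pos n β σ) ⟨1, by simp⟩
  have hE : mallowsE n β (fun σ => ((s : ℕ) : ℝ)
        - (((cycleFinset n σ s).min' (cycleFinset_nonempty n σ s) : ℕ) : ℝ))
      = (∑ σ, (((s : ℕ) : ℝ) - (cycMin s σ : ℕ)) * mallowsWeight n β σ) / Z := by
    unfold mallowsE mallowsProb
    rw [Finset.sum_div]
    exact Finset.sum_congr rfl fun σ _ => by rw [mul_div_assoc]; rfl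
  rw [hE, div_le_iff₀ hZpos, mul_min_of_nonneg _ _ (by norm_num), min_mul_of_nonneg _ _ hZpos.le]
  refine le_min ?_ ?_
  · have hT := sum_sub_cycMin_le hβ s
    have hL := two_le_scale hβ
    rcases le_total β 1 with h1 | h1
    · have hp : ∑ σ, (if cycMin s σ < s then mallowsWeight n β σ else 0) ≤ Z := by
        refine Finset.sum_le_sum fun σ _ => ?_
        split_ifs
        · exact le_rfl
        · exact (mallowsWeight_pos n β σ).le
      have hs2 : scale β ^ 2 ≤ 9 * (β ^ 2)⁻¹ := by
        calc scale β ^ 2 ≤ (3 / β) ^ 2 :=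
              pow_le_pow_left₀ (by linarith) (scale_le_of_le_one hβ h1) 2
          _ = _ := by field_simp; norm_num
      have he : 1 ≤ 9 * Real.exp (-(2 * β)) := by
        have h3 : Real.exp (2 * β) ≤ 9 := by
          calc Real.exp (2 * β) ≤ Real.exp (1 + 1) := Real.exp_le_exp.mpr (by linarith)
            _ = Real.exp 1 * Real.exp 1 := Real.exp_add 1 1
            _ ≤ 9 := by nlinarith [Real.exp_one_lt_d9, Real.exp_pos 1]
        rw [Real.exp_neg, ← div_eq_mul_inv, one_le_div (Real.exp_pos _)]
        exact h3
      have hb : 0 < (β ^ 2)⁻¹ := by positivity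
      calc _ ≤ _ := hT
        _ ≤ 22 * scale β ^ 2 * Z := by gcongr
        _ ≤ 22 * (9 * (β ^ 2)⁻¹) * Z := by gcongr
        _ = 198 * (1 * (β ^ 2)⁻¹) * Z := by ring
        _ ≤ 198 * ((9 * Real.exp (-(2 * β))) * max (β ^ 2)⁻¹ 1) * Z := by
            gcongr
            exact le_max_left _ _
        _ = _ := by ring
    · have hp := sum_cycMin_lt_le hβ s
      have hs2 : scale β ^ 2 ≤ 9 := by nlinarith [scale_le_of_one_le h1]
      calc _ ≤ _ := hT
        _ ≤ 22 * scale β ^ 2 * (Real.exp (-(2 * β)) * scale β ^ 2 * Z) := by gcongr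
        _ ≤ 22 * 9 * (Real.exp (-(2 * β)) * 9 * Z) := by gcongr
        _ = 1782 * (Real.exp (-(2 * β)) * 1) * Z := by ring
        _ ≤ _ := by
            gcongr
            exact le_max_right _ _
  · rw [hZ, Finset.mul_sum]
    refine Finset.sum_le_sum fun σ _ => ?_
    refine mul_le_mul_of_nonneg_right ?_ (mallowsWeight_pos n β σ).le
    have h1 : (0 : ℝ) ≤ (cycMin s σ : ℕ) := Nat.cast_nonneg _
    have h2 : (0 : ℝ) ≤ (s : ℕ) := Nat.cast_nonneg _
    linarith
end
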